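/- arXiv:1105.0585 — 2 statements merged into one kernel-verified Lean document; each statement's English description precedes it below -/
import Mathlib

section
/- First q-Hankel image of a q-Laguerre function: for every real ν > −1, every j ∈ ℕ and every real t with 0 < t < 1/√(1−q), it holds that ∫_0^{1/√(1−q)} d_q r · ( J^{(1)}_ν(rt|q²)/(rt)^ν ) · r^{2ν+1} · 𝓛^{(ν)}_j(r²/(1+q)|q²) · E_{q²}(−r²/(1+q)) = ( q^{2(j+1)(j+ν+1)} / [j]_{q²}! ) · ( t^{2j}/(1+q)^j ) · e_{q²}(−q²t²/(1+q)). -/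
open scoped BigOperators

noncomputable section

/-- The q-number `[u]_q = (q^u - 1)/(q - 1)`. -/
def qNum (q u : ℝ) : ℝ := (q ^ u - 1) / (q - 1)

/-- The q-factorial `[n]_q! = ∏_{i=1}^n [i]_q`. -/
def qFact (q : ℝ) (n : ℕ) : ℝ := ∏ i ∈ Finset.range n, qNum q ((i : ℝ) + 1)

/-- The q-Gamma function `Γ_q(t) = (1-q)^{1-t} ∏_{k=0}^∞ (1-q^{k+1})/(1-q^{k+t})`. -/
def qGamma (q t : ℝ) : ℝ :=
  (1 - q) ^ (1 - t) * ∏' k : ℕ, (1 - q ^ (k + 1)) / (1 - q ^ ((k : ℝ) + t))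

/-- The q-derivative `∂^q_t f(t) = (f(qt) - f(t))/((q-1)t)`.
The `q⁻¹`-derivative is `qDeriv q⁻¹`. -/
def qDeriv (q : ℝ) (f : ℝ → ℝ) (t : ℝ) : ℝ := (f (q * t) - f t) / ((q - 1) * t)

/-- The q-Pochhammer symbol `(a; q)_k = ∏_{l=0}^{k-1} (1 - a q^l)`. -/
def qPoch (a q : ℝ) (k : ℕ) : ℝ := ∏ l ∈ Finset.range k, (1 - a * q ^ l)

/-- The q-exponential `E_q(t) = ∑_{j=0}^∞ q^{j(j-1)/2} t^j/[j]_q!`. -/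
def qExpE (q t : ℝ) : ℝ := ∑' j : ℕ, q ^ (j * (j - 1) / 2) * t ^ j / qFact q j

/-- `e_q(-u) := 1/E_q(u)` (intended for `u ≥ 0`); `qExpe q u` denotes `e_q(-u)`. -/
def qExpe (q u : ℝ) : ℝ := (qExpE q u)⁻¹

/-- The first q-Bessel function `J^{(1)}_ν(x|q²)`. -/
def qBessel1 (q ν x : ℝ) : ℝ :=
  (x / (1 + q)) ^ ν *
    ∑' i : ℕ, (-1 : ℝ) ^ i / (qFact (q ^ 2) i * qGamma (q ^ 2) ((i : ℝ) + ν + 1)) *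
      (x / (1 + q)) ^ (2 * i)

/-- The second q-Bessel function `J^{(2)}_ν(x|q²)`. -/
def qBessel2 (q ν x : ℝ) : ℝ :=
  q ^ (ν ^ 2) * (x / (1 + q)) ^ ν *
    ∑' i : ℕ, q ^ (2 * (i : ℝ) * ((i : ℝ) + ν)) * (-1 : ℝ) ^ i /
        (qFact (q ^ 2) i * qGamma (q ^ 2) ((i : ℝ) + ν + 1)) *
      (x / (1 + q)) ^ (2 * i)

/-- The q-Laguerre polynomial `𝓛^{(α)}_j(u|q²)`. -/
def qLaguerre (q α : ℝ) (j : ℕ) (u : ℝ) : ℝ :=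
  ∑ i ∈ Finset.range (j + 1),
    q ^ ((j - i) * (j - i + 1)) * (-u) ^ i / (qFact (q ^ 2) (j - i) * qFact (q ^ 2) i) *
      (qPoch (q ^ (2 * (i : ℝ) + 2 * α + 2)) (q ^ 2) (j - i) / (1 - q ^ 2) ^ (j - i))

/-- The q-Laguerre polynomial `𝓛^{(α)}_j(u|q^{-2})`. -/
def qLaguerreInv (q α : ℝ) (j : ℕ) (u : ℝ) : ℝ :=
  q ^ (-(j : ℝ) * ((j : ℝ) + 1 + 2 * α)) *
    ∑ i ∈ Finset.range (j + 1),
      q ^ (2 * (i : ℝ) * ((i : ℝ) + α)) * (-u) ^ i / (qFact (q ^ 2) (j - i) * qFact (q ^ 2) i) *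
        (qPoch (q ^ (2 * (i : ℝ) + 2 * α + 2)) (q ^ 2) (j - i) / (1 - q ^ 2) ^ (j - i))

/-- The finite Jackson q-integral `∫_0^a f(t) d_q t = (1-q) a ∑_{k=0}^∞ f(q^k a) q^k`. -/
def jackson (q a : ℝ) (f : ℝ → ℝ) : ℝ := (1 - q) * a * ∑' k : ℕ, f (q ^ k * a) * q ^ k

/-- The infinite Jackson q-integral `∫_0^{γ·∞} f(t) d_q t = (1-q) γ ∑_{k=-∞}^∞ f(q^k γ) q^k`. -/
def jacksonInf (q γ : ℝ) (f : ℝ → ℝ) : ℝ := (1 - q) * γ * ∑' k : ℤ, f (q ^ k * γ) * q ^ k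

/-- The first q-Hankel transform `𝓗̄^{q,β}_ν`. -/
def hankel1 (q μ ν β : ℝ) (f : ℝ → ℝ) (t : ℝ) : ℝ :=
  (1 + q) / μ * jackson q (Real.sqrt (μ / ((1 - q ^ 2) * β)))
    (fun r => qBessel1 q ν ((1 + q) / μ * (r * t)) / (r * t) ^ ν * r ^ (2 * ν + 1) * f r)

/-- The second q-Hankel transform `𝓗^{q,γ}_ν`. -/
def hankel2 (q μ ν γ : ℝ) (f : ℝ → ℝ) (r : ℝ) : ℝ :=
  (1 + q) / μ * jacksonInf q γ
    (fun t => qBessel2 q ν (q * ((1 + q) / μ) * (r * t)) / (r * t) ^ ν * t ^ (2 * ν + 1) * f t)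

/-!
Put `p = q ^ 2` and `b = p ^ (ν + 1)`. The Jackson integral is a sum over the points `p ^ k` with
weight `b ^ k (p ^ k; p)_∞`, whose moments are given by Euler's expansion of `1 / (y; p)_∞`.
Expanding the Bessel function in powers of `x = p ^ k`, it remains to integrate `x ^ i` against the
Laguerre polynomial, and the `q`-Chu–Vandermonde sum evaluates this moment as a multiple of
`∏_{l < j} (p ^ i - p ^ l)`. The product vanishes for `i < j`, so the series in `i` starts at `j`,
and after the shift by `j` it is again Euler's expansion, now of the `q`-exponential on the right.
-/

open Filter Topology Finset.HasAntidiagonal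

section SeriesLemmas

variable {𝕜 : Type*} [NormedField 𝕜] [CompleteSpace 𝕜]

lemma summable_of_succ_eq_mul_of_tendsto {f r : ℕ → 𝕜} {l : 𝕜} (hl : ‖l‖ < 1)
    (hr : Tendsto r atTop (𝓝 l)) (hf : ∀ n, f (n + 1) = r n * f n) : Summable f := by
  obtain ⟨ρ, hlρ, hρ⟩ := exists_between hl
  refine summable_of_ratio_norm_eventually_le hρ ?_
  filter_upwards [hr.norm.eventually_lt_const hlρ] with n hn
  rw [hf, norm_mul]
  gcongr

lemma tendsto_tsum_mul_geometric_pow {c : ℕ → 𝕜} {x p : 𝕜} (hp : ‖p‖ < 1)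
    (hc : Summable fun n => ‖c n * x ^ n‖) :
    Tendsto (fun k : ℕ => ∑' n, c n * (x * p ^ k) ^ n) atTop (𝓝 (c 0)) := by
  have hlim : ∑' n, c n * (0 : 𝕜) ^ n = c 0 := by
    rw [tsum_eq_single 0 fun n hn => by simp [hn], pow_zero, mul_one]
  rw [← hlim]
  refine tendsto_tsum_of_dominated_convergence hc (fun n => ?_) (.of_forall fun k n => ?_)
  · simpa using
      (((tendsto_pow_atTop_nhds_zero_of_norm_lt_one hp).const_mul x).pow n).const_mul (c n)
  · have hpk : ‖p ^ k‖ ^ n ≤ 1 :=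
      pow_le_one₀ (norm_nonneg _) (norm_pow p k ▸ pow_le_one₀ (norm_nonneg p) hp.le)
    rw [mul_pow, ← mul_assoc, norm_mul, norm_pow (p ^ k)]
    exact mul_le_of_le_one_right (norm_nonneg _) hpk

lemma summable_mul_pow_of_norm_le_one {c : ℕ → 𝕜} {x p : 𝕜} (hp : ‖p‖ ≤ 1)
    (hc : Summable fun n => ‖c n * x ^ n‖) : Summable fun n => c n * (x * p) ^ n := by
  refine .of_norm_bounded hc fun n => ?_
  rw [mul_pow, ← mul_assoc, norm_mul, norm_pow p]
  exact mul_le_of_le_one_right (norm_nonneg _) (pow_le_one₀ (norm_nonneg p) hp)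

lemma tsum_mul_pow_sub_tsum_mul_pow {c : ℕ → 𝕜} {x p : 𝕜} (hp : ‖p‖ ≤ 1)
    (hc : Summable fun n => ‖c n * x ^ n‖) :
    ∑' n, c n * x ^ n - ∑' n, c n * (x * p) ^ n =
      x * ∑' n, c (n + 1) * (1 - p ^ (n + 1)) * x ^ n := by
  have hcp := summable_mul_pow_of_norm_le_one hp hc
  rw [← hc.of_norm.tsum_sub hcp, (hc.of_norm.sub hcp).tsum_eq_zero_add, ← tsum_mul_left]
  simp only [pow_zero, sub_self, zero_add]
  exact tsum_congr fun n => by ring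

lemma tsum_mul_tsum_mul_pow_comm {w c x : ℕ → 𝕜} (hw : Summable fun k => ‖w k‖)
    (hc : Summable fun i => ‖c i‖) (hx : ∀ k, ‖x k‖ ≤ 1) :
    ∑' k, w k * ∑' i, c i * x k ^ i = ∑' i, c i * ∑' k, w k * x k ^ i := by
  have hsum : Summable (Function.uncurry fun k i => w k * c i * x k ^ i) := by
    refine .of_norm_bounded (hw.mul_norm hc) fun ⟨k, i⟩ => ?_
    rw [Function.uncurry_apply_pair, norm_mul, norm_pow]
    exact mul_le_of_le_one_right (norm_nonneg _) (pow_le_one₀ (norm_nonneg _) (hx k))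
  calc ∑' k, w k * ∑' i, c i * x k ^ i
      = ∑' k, ∑' i, w k * c i * x k ^ i := by simp only [← tsum_mul_left, mul_assoc]
    _ = ∑' i, ∑' k, w k * c i * x k ^ i := hsum.tsum_comm.symm
    _ = ∑' i, c i * ∑' k, w k * x k ^ i := by
      simp only [← tsum_mul_left, mul_left_comm, mul_assoc]

end SeriesLemmas

section Pochhammer

/-- The infinite `q`-Pochhammer symbol `(x; p)_∞ = ∏_{l ≥ 0} (1 - x p ^ l)`, in terms of which both
`q`-exponentials and the `q`-Gamma function are expressed. For `1 ≤ |p|` it has no meaning. -/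
def qPochInf (x p : ℝ) : ℝ := ∏' l : ℕ, (1 - x * p ^ l)

lemma qPoch_zero (x p : ℝ) : qPoch x p 0 = 1 := Finset.prod_range_zero _

lemma qPoch_add (x p : ℝ) (m n : ℕ) :
    qPoch x p (m + n) = qPoch x p m * qPoch (x * p ^ m) p n := by
  simp only [qPoch, Finset.prod_range_add, pow_add, mul_assoc]

lemma qPoch_succ (x p : ℝ) (n : ℕ) : qPoch x p (n + 1) = qPoch x p n * (1 - x * p ^ n) :=
  Finset.prod_range_succ _ n

lemma qPoch_succ' (x p : ℝ) (n : ℕ) : qPoch x p (n + 1) = (1 - x) * qPoch (x * p) p n := by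
  rw [add_comm n, qPoch_add, pow_one, qPoch_succ, qPoch_zero, pow_zero, mul_one, one_mul]

lemma prod_pow_add_sub_pow_mul_qPoch (p : ℝ) (j m : ℕ) :
    (∏ l ∈ Finset.range j, (p ^ (m + j) - p ^ l)) * qPoch p p m =
      (-1) ^ j * p ^ j.choose 2 * qPoch p p (m + j) := by
  induction j generalizing m with
  | zero => simp
  | succ j ih =>
    have hm := ih (m + 1)
    rw [qPoch_succ, show m + 1 + j = m + (j + 1) by ring] at hm
    rw [Finset.prod_range_succ, Nat.choose_succ_succ' j 1, Nat.choose_one_right]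
    linear_combination (-p ^ j) * hm

variable {p x : ℝ}

lemma abs_mul_pow_lt_one (hp : |p| ≤ 1) (hx : |x| < 1) (n : ℕ) : |x * p ^ n| < 1 := by
  rw [abs_mul, abs_pow]
  exact mul_lt_one_of_nonneg_of_lt_one_left (abs_nonneg x) hx (pow_le_one₀ (abs_nonneg p) hp)

lemma one_sub_mul_pow_ne_zero (hp : |p| ≤ 1) (hx : |x| < 1) (n : ℕ) : 1 - x * p ^ n ≠ 0 :=
  sub_ne_zero.2 (lt_of_abs_lt (abs_mul_pow_lt_one hp hx n)).ne'

lemma qPoch_ne_zero (hp : |p| ≤ 1) (hx : |x| < 1) (n : ℕ) : qPoch x p n ≠ 0 :=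
  Finset.prod_ne_zero_iff.2 fun l _ => one_sub_mul_pow_ne_zero hp hx l

lemma qPoch_self_ne_zero (hp : |p| < 1) (n : ℕ) : qPoch p p n ≠ 0 := qPoch_ne_zero hp.le hp n

lemma tendsto_one_sub_mul_pow (hp : |p| < 1) (x : ℝ) :
    Tendsto (fun n : ℕ => 1 - x * p ^ n) atTop (𝓝 1) := by
  simpa using ((tendsto_pow_atTop_nhds_zero_of_abs_lt_one hp).const_mul x).const_sub 1

lemma hasProd_qPochInf (hp : |p| < 1) (x : ℝ) :
    HasProd (fun l : ℕ => 1 - x * p ^ l) (qPochInf x p) := by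
  refine Multipliable.hasProd ?_
  simp only [sub_eq_add_neg]
  exact multipliable_one_add_of_summable ((summable_geometric_of_abs_lt_one hp).mul_left x).neg.norm

lemma tendsto_qPoch (hp : |p| < 1) (x : ℝ) :
    Tendsto (qPoch x p) atTop (𝓝 (qPochInf x p)) :=
  (hasProd_qPochInf hp x).tendsto_prod_nat

lemma qPochInf_eq_qPoch_mul (hp : |p| < 1) (x : ℝ) (n : ℕ) :
    qPochInf x p = qPoch x p n * qPochInf (x * p ^ n) p := by
  have hshift : (fun l : ℕ => 1 - x * p ^ n * p ^ l) = fun l => 1 - x * p ^ (l + n) := by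
    ext l; ring
  have htail := (hasProd_qPochInf hp (x * p ^ n)).multipliable
  rw [hshift] at htail
  rw [qPochInf, qPochInf, hshift]
  exact htail.prod_mul_tprod_nat_mul'.symm

lemma qPochInf_one (hp : |p| < 1) : qPochInf 1 p = 0 := by
  rw [qPochInf_eq_qPoch_mul hp 1 1, qPoch_succ, pow_zero, mul_one, sub_self, mul_zero, zero_mul]

end Pochhammer

section Euler

variable {p x : ℝ}

lemma summable_qPoch_inv_mul_pow (hp : |p| < 1) (hx : |x| < 1) :
    Summable fun n => (qPoch p p n)⁻¹ * x ^ n := by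
  have hratio : Tendsto (fun n : ℕ => x / (1 - p * p ^ n)) atTop (𝓝 x) := by
    simpa [Pi.div_def] using
      (tendsto_const_nhds (x := x)).div (tendsto_one_sub_mul_pow hp p) one_ne_zero
  refine summable_of_succ_eq_mul_of_tendsto hx hratio fun n => ?_
  rw [qPoch_succ, mul_inv, pow_succ]
  ring

lemma summable_pow_choose_two_div_qPoch_mul_pow (hp : |p| < 1) (x : ℝ) :
    Summable fun n => (-1) ^ n * p ^ n.choose 2 / qPoch p p n * x ^ n := by
  have hratio : Tendsto (fun n : ℕ => -x * p ^ n / (1 - p * p ^ n)) atTop (𝓝 0) := by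
    simpa [Pi.div_def] using
      ((tendsto_pow_atTop_nhds_zero_of_abs_lt_one hp).const_mul (-x)).div
        (tendsto_one_sub_mul_pow hp p) one_ne_zero
  refine summable_of_succ_eq_mul_of_tendsto (by simp) hratio fun n => ?_
  rw [qPoch_succ, Nat.choose_succ_succ' n 1, Nat.choose_one_right, div_eq_mul_inv,
    mul_inv]
  ring

lemma tsum_qPoch_inv_mul_pow_step (hp : |p| < 1) (hx : |x| < 1) :
    ∑' n, (qPoch p p n)⁻¹ * (x * p) ^ n = (1 - x) * ∑' n, (qPoch p p n)⁻¹ * x ^ n := by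
  have hcoeff (n : ℕ) : (qPoch p p (n + 1))⁻¹ * (1 - p ^ (n + 1)) = (qPoch p p n)⁻¹ := by
    have := one_sub_mul_pow_ne_zero hp.le hp n
    rw [qPoch_succ, pow_succ']
    field
  have h := tsum_mul_pow_sub_tsum_mul_pow hp.le (summable_qPoch_inv_mul_pow hp hx).norm
  simp only [hcoeff] at h
  linear_combination -h

lemma tsum_pow_choose_two_div_qPoch_mul_pow_step (hp : |p| < 1) (x : ℝ) :
    ∑' n, (-1) ^ n * p ^ n.choose 2 / qPoch p p n * x ^ n =
      (1 - x) * ∑' n, (-1) ^ n * p ^ n.choose 2 / qPoch p p n * (x * p) ^ n := by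
  have hcoeff (n : ℕ) :
      (-1) ^ (n + 1) * p ^ (n + 1).choose 2 / qPoch p p (n + 1) * (1 - p ^ (n + 1)) * x ^ n =
        -((-1) ^ n * p ^ n.choose 2 / qPoch p p n * (x * p) ^ n) := by
    have := one_sub_mul_pow_ne_zero hp.le hp n
    rw [qPoch_succ, Nat.choose_succ_succ' n 1, Nat.choose_one_right, pow_succ' p n]
    field
  have h := tsum_mul_pow_sub_tsum_mul_pow hp.le
    (summable_pow_choose_two_div_qPoch_mul_pow hp x).norm
  simp only [hcoeff, tsum_neg] at h
  linear_combination h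

theorem hasSum_qPochInf (hp : |p| < 1) (x : ℝ) :
    HasSum (fun n => (-1) ^ n * p ^ n.choose 2 / qPoch p p n * x ^ n) (qPochInf x p) := by
  set f : ℝ → ℝ := fun y => ∑' n, (-1) ^ n * p ^ n.choose 2 / qPoch p p n * y ^ n
  have hiter (n : ℕ) : qPoch x p n * f (x * p ^ n) = f x := by
    induction n with
    | zero => simp [qPoch_zero]
    | succ n ih =>
      have hstep : f (x * p ^ n) = (1 - x * p ^ n) * f (x * p ^ n * p) :=
        tsum_pow_choose_two_div_qPoch_mul_pow_step hp (x * p ^ n)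
      rw [← ih, hstep, qPoch_succ, pow_succ, ← mul_assoc x, mul_assoc]
  have hsum := summable_pow_choose_two_div_qPoch_mul_pow hp x
  have hlim : Tendsto (fun n => f (x * p ^ n)) atTop (𝓝 1) := by
    simpa [qPoch_zero] using tendsto_tsum_mul_geometric_pow hp hsum.norm
  have hprod := (tendsto_qPoch hp x).mul hlim
  simp only [hiter, mul_one] at hprod
  exact tendsto_nhds_unique hprod tendsto_const_nhds ▸ hsum.hasSum

lemma qPochInf_mul_tsum_qPoch_inv_mul_pow (hp : |p| < 1) (hx : |x| < 1) :
    qPochInf x p * ∑' n, (qPoch p p n)⁻¹ * x ^ n = 1 := by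
  set f : ℝ → ℝ := fun y => ∑' n, (qPoch p p n)⁻¹ * y ^ n
  have hiter (n : ℕ) : f (x * p ^ n) = qPoch x p n * f x := by
    induction n with
    | zero => simp [qPoch_zero]
    | succ n ih =>
      have hstep : f (x * p ^ n * p) = (1 - x * p ^ n) * f (x * p ^ n) :=
        tsum_qPoch_inv_mul_pow_step hp (abs_mul_pow_lt_one hp.le hx n)
      rw [pow_succ, ← mul_assoc, hstep, ih, qPoch_succ]
      ring
  have hlim : Tendsto (fun n => f (x * p ^ n)) atTop (𝓝 1) := by
    simpa [qPoch_zero] using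
      tendsto_tsum_mul_geometric_pow hp (summable_qPoch_inv_mul_pow hp hx).norm
  simp only [hiter] at hlim
  exact tendsto_nhds_unique ((tendsto_qPoch hp x).mul_const (f x)) hlim

lemma qPochInf_ne_zero (hp : |p| < 1) (hx : |x| < 1) : qPochInf x p ≠ 0 :=
  left_ne_zero_of_mul_eq_one (qPochInf_mul_tsum_qPoch_inv_mul_pow hp hx)

theorem hasSum_inv_qPochInf (hp : |p| < 1) (hx : |x| < 1) :
    HasSum (fun n => (qPoch p p n)⁻¹ * x ^ n) (qPochInf x p)⁻¹ :=
  eq_inv_of_mul_eq_one_right (qPochInf_mul_tsum_qPoch_inv_mul_pow hp hx) ▸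
    (summable_qPoch_inv_mul_pow hp hx).hasSum

end Euler

section ChuVandermonde

/-- The summand of the terminating `q`-Chu–Vandermonde sum, indexed by `l + m = j`. In terms of the
usual `₂φ₁(p⁻ʲ, b c; b; p, p)` the factor `(b p ^ l; p)_m` is `(b; p)_j / (b; p)_l`, which keeps the
sum polynomial in `b`. -/
def qVandermondeTerm (p b c : ℝ) (lm : ℕ × ℕ) : ℝ :=
  (-p) ^ lm.1 * p ^ (lm.2 + 1).choose 2 * qPoch (b * p ^ lm.1) p lm.2 * qPoch (b * c) p lm.1 /
    (qPoch p p lm.1 * qPoch p p lm.2)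

variable {p : ℝ}

lemma one_sub_pow_succ_ne_zero_of_qPoch (hp : ∀ n, qPoch p p n ≠ 0) (n : ℕ) :
    1 - p ^ (n + 1) ≠ 0 := by
  rw [pow_succ']
  exact right_ne_zero_of_mul (qPoch_succ p p n ▸ hp (n + 1))

lemma qVandermondeTerm_succ_right (hp : ∀ n, qPoch p p n ≠ 0) (b c : ℝ) (l m : ℕ) :
    p ^ l * (1 - p ^ (m + 1)) * qVandermondeTerm p b c (l, m + 1) =
      p ^ (l + m + 1) * (1 - b * p ^ (l + m)) * qVandermondeTerm p b c (l, m) := by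
  have := hp l
  have := hp m
  have := one_sub_pow_succ_ne_zero_of_qPoch hp m
  simp only [qVandermondeTerm, qPoch_succ, ← pow_succ', Nat.choose_succ_succ' (m + 1) 1,
    Nat.choose_one_right]
  field_simp
  ring

lemma qVandermondeTerm_succ_left (hp : ∀ n, qPoch p p n ≠ 0) (b c : ℝ) (l m : ℕ) :
    (1 - p ^ (l + 1)) * qVandermondeTerm p b c (l + 1, m) =
      -(p * (1 - b * c)) * qVandermondeTerm p (b * p) c (l, m) := by
  have := hp l
  have := hp m
  have := one_sub_pow_succ_ne_zero_of_qPoch hp l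
  have hshift : qPoch (b * p ^ (l + 1)) p m = qPoch (b * p * p ^ l) p m := by
    rw [pow_succ', mul_assoc b]
  have hpoch : qPoch (b * c) p (l + 1) = (1 - b * c) * qPoch (b * p * c) p l := by
    rw [qPoch_succ', mul_right_comm]
  simp only [qVandermondeTerm, hshift, hpoch, qPoch_succ, ← pow_succ']
  field

lemma sum_qVandermondeTerm_succ (hp : ∀ n, qPoch p p n ≠ 0) (b c : ℝ) (j : ℕ) :
    (1 - p ^ (j + 1)) * ∑ lm ∈ antidiagonal (j + 1), qVandermondeTerm p b c lm =
      p ^ (j + 1) * (1 - b * p ^ j) * ∑ lm ∈ antidiagonal j, qVandermondeTerm p b c lm -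
        p * (1 - b * c) * ∑ lm ∈ antidiagonal j, qVandermondeTerm p (b * p) c lm := by
  have hsplit : (1 - p ^ (j + 1)) * ∑ lm ∈ antidiagonal (j + 1), qVandermondeTerm p b c lm =
      ∑ lm ∈ antidiagonal (j + 1), p ^ lm.1 * (1 - p ^ lm.2) * qVandermondeTerm p b c lm +
        ∑ lm ∈ antidiagonal (j + 1), (1 - p ^ lm.1) * qVandermondeTerm p b c lm := by
    rw [← Finset.sum_add_distrib, Finset.mul_sum]
    refine Finset.sum_congr rfl fun lm hlm => ?_
    rw [← mem_antidiagonal.1 hlm, pow_add]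
    ring
  have hright : ∑ lm ∈ antidiagonal j,
        p ^ lm.1 * (1 - p ^ (lm.2 + 1)) * qVandermondeTerm p b c (lm.1, lm.2 + 1) =
      p ^ (j + 1) * (1 - b * p ^ j) * ∑ lm ∈ antidiagonal j, qVandermondeTerm p b c lm := by
    rw [Finset.mul_sum]
    refine Finset.sum_congr rfl fun lm hlm => ?_
    rw [qVandermondeTerm_succ_right hp, mem_antidiagonal.1 hlm]
  have hleft : ∑ lm ∈ antidiagonal j,
        (1 - p ^ (lm.1 + 1)) * qVandermondeTerm p b c (lm.1 + 1, lm.2) =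
      -(p * (1 - b * c)) * ∑ lm ∈ antidiagonal j, qVandermondeTerm p (b * p) c lm := by
    rw [Finset.mul_sum]
    exact Finset.sum_congr rfl fun lm _ => qVandermondeTerm_succ_left hp b c lm.1 lm.2
  rw [hsplit, Finset.Nat.sum_antidiagonal_succ', Finset.Nat.sum_antidiagonal_succ, hright, hleft]
  simp only [pow_zero, sub_self, mul_zero, zero_mul, zero_add]
  ring

theorem sum_qVandermondeTerm (hp : ∀ n, qPoch p p n ≠ 0) (b c : ℝ) (j : ℕ) :
    ∑ lm ∈ antidiagonal j, qVandermondeTerm p b c lm =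
      p ^ (j + 1).choose 2 * b ^ j * (∏ l ∈ Finset.range j, (c - p ^ l)) / qPoch p p j := by
  induction j generalizing b with
  | zero => simp [qVandermondeTerm, qPoch_zero]
  | succ j ih =>
    have hj := one_sub_pow_succ_ne_zero_of_qPoch hp j
    have := hp j
    have hrec := sum_qVandermondeTerm_succ hp b c j
    rw [ih b, ih (b * p)] at hrec
    rw [← mul_right_inj' hj, hrec, Finset.prod_range_succ, qPoch_succ, ← pow_succ',
      Nat.choose_succ_succ' (j + 1) 1, Nat.choose_one_right]
    field_simp
    ring

end ChuVandermonde

section Moments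

/-- The little `q`-Laguerre (Wall) polynomial of degree `j` for the weight `b ^ k (p ^ k; p)_∞` at
the points `x = p ^ k`. It is `p ^ (j (j + 1) / 2) (b; p)_j / (p; p)_j` times the standard
`p_j(x / p; b / p | p)`, the normalization in which it agrees with `qLaguerre` when
`b = p ^ (α + 1)` and `x = (1 - p) u`. -/
def littleLaguerre (p b : ℝ) (j : ℕ) (x : ℝ) : ℝ :=
  ∑ lm ∈ antidiagonal j, p ^ (lm.2 + 1).choose 2 * qPoch (b * p ^ lm.1) p lm.2 /
    (qPoch p p lm.1 * qPoch p p lm.2) * (-x) ^ lm.1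

/-- The basic hypergeometric series `₂φ₁(0, 0; b; p, -x)`, which is `J^{(1)}_ν` up to its power
prefactor when `b = p ^ (ν + 1)`. -/
def besselSeries (p b x : ℝ) : ℝ := ∑' i : ℕ, (-x) ^ i / (qPoch p p i * qPoch b p i)

variable {p b y z : ℝ}

lemma hasSum_pow_mul_qPochInf_pow (hp : |p| < 1) (hy : |y| < 1) :
    HasSum (fun k : ℕ => y ^ k * qPochInf (p ^ k) p) (y * qPochInf p p / qPochInf y p) := by
  have htail (k : ℕ) : y ^ (k + 1) * qPochInf (p ^ (k + 1)) p =
      y * qPochInf p p * ((qPoch p p k)⁻¹ * y ^ k) := by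
    have := qPoch_self_ne_zero hp k
    rw [qPochInf_eq_qPoch_mul hp p k, ← pow_succ']
    field
  have hsum := (hasSum_inv_qPochInf hp hy).mul_left (y * qPochInf p p)
  simp only [← htail, ← div_eq_mul_inv] at hsum
  have hzero := (hasSum_nat_add_iff (f := fun k : ℕ => y ^ k * qPochInf (p ^ k) p) 1).1 hsum
  rwa [Finset.sum_range_one, pow_zero, pow_zero, qPochInf_one hp, mul_zero, add_zero] at hzero

lemma div_qPochInf_mul_pow_add (hp : |p| < 1) (hb : |b| < 1) (i l : ℕ) :
    qPochInf p p / qPochInf (b * p ^ (i + l)) p =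
      qPochInf p p / qPochInf b p * qPoch b p i * qPoch (b * p ^ i) p l := by
  have := qPochInf_ne_zero hp (abs_mul_pow_lt_one hp.le hb (i + l))
  have hpoch := qPoch_ne_zero hp.le hb (i + l)
  rw [qPochInf_eq_qPoch_mul hp b (i + l), qPoch_add]
  rw [qPoch_add] at hpoch
  have := left_ne_zero_of_mul hpoch
  have := right_ne_zero_of_mul hpoch
  field

lemma hasSum_littleLaguerre_mul_pow (hp : |p| < 1) (hb : |b| < 1) (i j : ℕ) :
    HasSum (fun k : ℕ => b ^ k * qPochInf (p ^ k) p * littleLaguerre p b j (p ^ k) * (p ^ k) ^ i)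
      (qPochInf p p / qPochInf b p * qPoch b p i * (b * p ^ i) *
        (p ^ (j + 1).choose 2 * b ^ j * (∏ l ∈ Finset.range j, (p ^ i - p ^ l)) /
          qPoch p p j)) := by
  rw [← sum_qVandermondeTerm (qPoch_self_ne_zero hp), Finset.mul_sum]
  simp only [littleLaguerre, Finset.mul_sum, Finset.sum_mul]
  refine hasSum_sum fun ⟨l, m⟩ _ => ?_
  have hsum := (hasSum_pow_mul_qPochInf_pow hp (abs_mul_pow_lt_one hp.le hb (i + l))).mul_left
    (p ^ (m + 1).choose 2 * qPoch (b * p ^ l) p m / (qPoch p p l * qPoch p p m) * (-1) ^ l)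
  rw [mul_div_assoc (b * p ^ (i + l)), div_qPochInf_mul_pow_add hp hb] at hsum
  have hterm (k : ℕ) : b ^ k * qPochInf (p ^ k) p * (p ^ (m + 1).choose 2 *
        qPoch (b * p ^ l) p m / (qPoch p p l * qPoch p p m) * (-p ^ k) ^ l) * (p ^ k) ^ i =
      p ^ (m + 1).choose 2 * qPoch (b * p ^ l) p m / (qPoch p p l * qPoch p p m) * (-1) ^ l *
        ((b * p ^ (i + l)) ^ k * qPochInf (p ^ k) p) := by
    ring
  have hval : qPochInf p p / qPochInf b p * qPoch b p i * (b * p ^ i) *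
        qVandermondeTerm p b (p ^ i) (l, m) =
      p ^ (m + 1).choose 2 * qPoch (b * p ^ l) p m / (qPoch p p l * qPoch p p m) * (-1) ^ l *
        (b * p ^ (i + l) *
          (qPochInf p p / qPochInf b p * qPoch b p i * qPoch (b * p ^ i) p l)) := by
    rw [qVandermondeTerm, neg_pow p]
    ring
  simpa only [hterm, hval] using hsum

lemma summable_besselSeries (hp : |p| < 1) (hz : |z| < 1) (b : ℝ) :
    Summable fun i => (-z) ^ i / (qPoch p p i * qPoch b p i) := by
  have hratio : Tendsto (fun i : ℕ => -z / ((1 - p * p ^ i) * (1 - b * p ^ i))) atTop (𝓝 (-z)) := by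
    simpa [Pi.div_def] using (tendsto_const_nhds (x := -z)).div
      ((tendsto_one_sub_mul_pow hp p).mul (tendsto_one_sub_mul_pow hp b)) (by simp)
  refine summable_of_succ_eq_mul_of_tendsto (by simpa using hz) hratio fun i => ?_
  rw [qPoch_succ, qPoch_succ, div_mul_div_comm, pow_succ', mul_mul_mul_comm, mul_comm (_ * _)]

lemma two_mul_succ_choose_two (n : ℕ) : 2 * (n + 1).choose 2 = n * (n + 1) := by
  rw [Nat.choose_two_right, Nat.add_sub_cancel, mul_comm n,
    Nat.mul_div_cancel' (mul_comm n _ ▸ Nat.even_mul_succ_self n).two_dvd]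

lemma choose_two_add_succ_choose_two_add (n : ℕ) :
    n.choose 2 + (n + 1).choose 2 + n = n * (n + 1) := by
  rw [← two_mul_succ_choose_two, Nat.choose_succ_succ' n 1, Nat.choose_one_right]
  ring

lemma pow_mul_prod_pow_add_sub_pow_eq (hp : ∀ n, qPoch p p n ≠ 0) (b z : ℝ) (j m : ℕ) :
    (-z) ^ (m + j) / qPoch p p (m + j) * (b * p ^ (m + j)) *
        (p ^ (j + 1).choose 2 * b ^ j * (∏ l ∈ Finset.range j, (p ^ (m + j) - p ^ l)) /
          qPoch p p j) =
      z ^ j * b ^ (j + 1) * p ^ (j * (j + 1)) / qPoch p p j *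
        ((qPoch p p m)⁻¹ * (-(z * p)) ^ m) := by
  have := hp m
  have := hp j
  have := hp (m + j)
  have hsign : (-z) ^ (m + j) * (-1) ^ j = (-z) ^ m * z ^ j := by
    rw [pow_add, mul_assoc, ← mul_pow, neg_mul_neg, mul_one]
  rw [eq_div_of_mul_eq (hp m) (prod_pow_add_sub_pow_mul_qPoch p j m),
    ← choose_two_add_succ_choose_two_add, ← neg_mul, mul_pow]
  field_simp
  linear_combination p ^ (m + j + j.choose 2 + (j + 1).choose 2) * b ^ (j + 1) * hsign

lemma hasSum_pow_mul_prod_pow_sub_pow (hp : |p| < 1) (hz : |z| < 1) (b : ℝ) (j : ℕ) :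
    HasSum (fun i : ℕ => (-z) ^ i / qPoch p p i * (b * p ^ i) *
        (p ^ (j + 1).choose 2 * b ^ j * (∏ l ∈ Finset.range j, (p ^ i - p ^ l)) / qPoch p p j))
      (z ^ j * b ^ (j + 1) * p ^ (j * (j + 1)) / qPoch p p j * (qPochInf (-(z * p)) p)⁻¹) := by
  have hzp : |-(z * p)| < 1 := by simpa using abs_mul_pow_lt_one hp.le hz 1
  refine ((add_left_injective j).hasSum_iff fun i hi => ?_).1 ?_
  · have hij : i < j := by
      by_contra! hji
      exact hi ⟨i - j, Nat.sub_add_cancel hji⟩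
    rw [Finset.prod_eq_zero (Finset.mem_range.2 hij) (sub_self _)]
    simp
  · simp only [Function.comp_def, pow_mul_prod_pow_add_sub_pow_eq (qPoch_self_ne_zero hp)]
    exact (hasSum_inv_qPochInf hp hzp).mul_left _

theorem tsum_littleLaguerre_mul_besselSeries (hp : |p| < 1) (hb : |b| < 1) (hz : |z| < 1) (j : ℕ) :
    ∑' k : ℕ, b ^ k * qPochInf (p ^ k) p * littleLaguerre p b j (p ^ k) *
        besselSeries p b (z * p ^ k) =
      qPochInf p p / qPochInf b p *
        (z ^ j * b ^ (j + 1) * p ^ (j * (j + 1)) / qPoch p p j * (qPochInf (-(z * p)) p)⁻¹) := by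
  set w : ℕ → ℝ := fun k => b ^ k * qPochInf (p ^ k) p * littleLaguerre p b j (p ^ k)
  set c : ℕ → ℝ := fun i => (-z) ^ i / (qPoch p p i * qPoch b p i)
  have hw : Summable w := by
    simpa only [pow_zero, mul_one] using (hasSum_littleLaguerre_mul_pow hp hb 0 j).summable
  have hpow (k : ℕ) : ‖p ^ k‖ ≤ 1 := norm_pow p k ▸ pow_le_one₀ (norm_nonneg p) hp.le
  have hseries (k : ℕ) : besselSeries p b (z * p ^ k) = ∑' i, c i * (p ^ k) ^ i :=
    tsum_congr fun i => by rw [← neg_mul, mul_pow, mul_div_right_comm]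
  have hmoment (i : ℕ) : c i * ∑' k, w k * (p ^ k) ^ i = qPochInf p p / qPochInf b p *
      ((-z) ^ i / qPoch p p i * (b * p ^ i) *
        (p ^ (j + 1).choose 2 * b ^ j * (∏ l ∈ Finset.range j, (p ^ i - p ^ l)) /
          qPoch p p j)) := by
    have hc : c i * qPoch b p i = (-z) ^ i / qPoch p p i := by
      rw [div_mul_eq_mul_div, mul_div_mul_right _ _ (qPoch_ne_zero hp.le hb i)]
    rw [(hasSum_littleLaguerre_mul_pow hp hb i j).tsum_eq, ← hc]
    ring
  calc ∑' k, w k * besselSeries p b (z * p ^ k)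
      = ∑' k, w k * ∑' i, c i * (p ^ k) ^ i := by simp only [hseries]
    _ = ∑' i, c i * ∑' k, w k * (p ^ k) ^ i :=
      tsum_mul_tsum_mul_pow_comm hw.norm (summable_besselSeries hp hz b).norm hpow
    _ = _ := by
      simp only [hmoment, tsum_mul_left, (hasSum_pow_mul_prod_pow_sub_pow hp hz b j).tsum_eq]

end Moments

section Translation

variable {p : ℝ}

lemma qFact_eq_qPoch_div (p : ℝ) (n : ℕ) : qFact p n = qPoch p p n / (1 - p) ^ n := by
  have hpow : (1 - p) ^ n = ∏ _i ∈ Finset.range n, (1 - p) := by simp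
  rw [qFact, qPoch, hpow, ← Finset.prod_div_distrib]
  refine Finset.prod_congr rfl fun i _ => ?_
  rw [qNum, ← Nat.cast_succ, Real.rpow_natCast, pow_succ', ← neg_div_neg_eq, neg_sub, neg_sub]

lemma qExpE_eq_qPochInf (hp : |p| < 1) (u : ℝ) : qExpE p u = qPochInf (-((1 - p) * u)) p := by
  rw [qExpE, ← (hasSum_qPochInf hp _).tsum_eq]
  refine tsum_congr fun n => ?_
  have := qPoch_self_ne_zero hp n
  have : 1 - p ≠ 0 := sub_ne_zero.2 (lt_of_abs_lt hp).ne'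
  rw [qFact_eq_qPoch_div, ← Nat.choose_two_right, neg_pow ((1 - p) * u), mul_pow]
  have hsign : ((-1) ^ n * (-1) ^ n : ℝ) = 1 := by rw [← mul_pow]; simp
  field_simp
  linear_combination -(p ^ n.choose 2 * u ^ n) * hsign

lemma abs_rpow_lt_one (hp0 : 0 ≤ p) (hp1 : p < 1) {s : ℝ} (hs : 0 < s) : |p ^ s| < 1 := by
  rw [abs_of_nonneg (Real.rpow_nonneg hp0 s)]
  exact Real.rpow_lt_one hp0 hp1 hs

lemma qGamma_eq_qPochInf_div (hp0 : 0 < p) (hp1 : p < 1) {s : ℝ} (hs : 0 < s) :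
    qGamma p s = (1 - p) ^ (1 - s) * (qPochInf p p / qPochInf (p ^ s) p) := by
  have hp : |p| < 1 := by rwa [abs_of_pos hp0]
  have hps := abs_rpow_lt_one hp0.le hp1 hs
  rw [qGamma, ← ((hasProd_qPochInf hp p).div₀ (hasProd_qPochInf hp (p ^ s))
    (qPochInf_ne_zero hp hps)).tprod_eq]
  congr 1
  refine tprod_congr fun k => ?_
  rw [pow_succ', add_comm, Real.rpow_add hp0, Real.rpow_natCast]

lemma qGamma_add_natCast (hp0 : 0 < p) (hp1 : p < 1) {s : ℝ} (hs : 0 < s) (n : ℕ) :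
    qGamma p (s + n) = qGamma p s * (qPoch (p ^ s) p n / (1 - p) ^ n) := by
  have hp : |p| < 1 := by rwa [abs_of_pos hp0]
  have hps := abs_rpow_lt_one hp0.le hp1 hs
  have h1p : 0 < 1 - p := sub_pos.2 hp1
  have := qPoch_ne_zero hp.le hps n
  have := qPochInf_ne_zero hp (abs_mul_pow_lt_one hp.le hps n)
  rw [qGamma_eq_qPochInf_div hp0 hp1 hs, qGamma_eq_qPochInf_div hp0 hp1 (by positivity),
    qPochInf_eq_qPoch_mul hp (p ^ s) n, Real.rpow_add hp0, Real.rpow_natCast, ← sub_sub,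
    Real.rpow_sub_natCast h1p.ne']
  field

variable {q : ℝ}

lemma qBessel1_eq_besselSeries (hq0 : 0 < q) (hq1 : q < 1) {ν : ℝ} (hν : -1 < ν) (x : ℝ) :
    qBessel1 q ν x = (x / (1 + q)) ^ ν / qGamma (q ^ 2) (ν + 1) *
      besselSeries (q ^ 2) ((q ^ 2) ^ (ν + 1)) (((1 - q) * x) ^ 2) := by
  have hp1 : q ^ 2 < 1 := pow_lt_one₀ hq0.le hq1 two_ne_zero
  have h1p : 1 - q ^ 2 ≠ 0 := (sub_pos.2 hp1).ne'
  rw [qBessel1, besselSeries, div_mul_eq_mul_div, mul_div_assoc, ← tsum_div_const]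
  congr 1
  refine tsum_congr fun i => ?_
  have harg : (x / (1 + q)) ^ (2 * i) * ((1 - q ^ 2) ^ i * (1 - q ^ 2) ^ i) =
      (((1 - q) * x) ^ 2) ^ i := by
    rw [pow_mul, ← mul_pow, ← mul_pow]
    congr 1
    field_simp
    ring
  rw [add_assoc (i : ℝ), add_comm (i : ℝ), qGamma_add_natCast (by positivity) hp1 (by linarith),
    qFact_eq_qPoch_div, neg_pow (_ ^ 2), ← harg]
  field

lemma qLaguerre_eq_littleLaguerre (hq0 : 0 < q) (hq1 : q < 1) (ν : ℝ) (j : ℕ) (u : ℝ) :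
    qLaguerre q ν j u = littleLaguerre (q ^ 2) ((q ^ 2) ^ (ν + 1)) j ((1 - q ^ 2) * u) := by
  have hp1 : q ^ 2 < 1 := pow_lt_one₀ hq0.le hq1 two_ne_zero
  have h1p : 1 - q ^ 2 ≠ 0 := (sub_pos.2 hp1).ne'
  rw [littleLaguerre, Finset.Nat.sum_antidiagonal_eq_sum_range_succ fun l m =>
    (q ^ 2) ^ (m + 1).choose 2 * qPoch ((q ^ 2) ^ (ν + 1) * (q ^ 2) ^ l) (q ^ 2) m /
      (qPoch (q ^ 2) (q ^ 2) l * qPoch (q ^ 2) (q ^ 2) m) * (-((1 - q ^ 2) * u)) ^ l]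
  refine Finset.sum_congr rfl fun l _ => ?_
  have hbase : q ^ (2 * (l : ℝ) + 2 * ν + 2) = (q ^ 2) ^ (ν + 1) * (q ^ 2) ^ l := by
    rw [← Real.rpow_natCast (q ^ 2) l, ← Real.rpow_add (by positivity),
      ← Real.rpow_natCast_mul hq0.le]
    congr 1
    push_cast
    ring
  have hexp : (q ^ 2) ^ (j - l + 1).choose 2 = q ^ ((j - l) * (j - l + 1)) := by
    rw [← pow_mul, two_mul_succ_choose_two]
  rw [hbase, hexp, qFact_eq_qPoch_div, qFact_eq_qPoch_div, ← mul_neg, mul_pow]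
  field

lemma jackson_congr {a : ℝ} (hq : 0 < q) (ha : 0 < a) {f g : ℝ → ℝ}
    (hfg : ∀ r, 0 < r → f r = g r) : jackson q a f = jackson q a g := by
  rw [jackson, jackson]
  congr 1
  exact tsum_congr fun k => by rw [hfg _ (by positivity)]

lemma jackson_rpow_mul_comp_sq (hq0 : 0 < q) (hq1 : q < 1) (ν : ℝ) (F : ℝ → ℝ) :
    jackson q (1 / √(1 - q)) (fun r => r ^ (2 * ν + 1) * F ((1 - q) * r ^ 2)) =
      (1 - q) ^ (-ν) * ∑' k : ℕ, ((q ^ 2) ^ (ν + 1)) ^ k * F ((q ^ 2) ^ k) := by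
  have h1q : 0 < 1 - q := sub_pos.2 hq1
  set a := 1 / √(1 - q)
  have ha : 0 < a := by positivity
  have ha_sq : a ^ 2 = (1 - q)⁻¹ := by rw [div_pow, Real.sq_sqrt h1q.le, one_pow, one_div]
  have ha_rpow : (1 - q) * a * a ^ (2 * ν + 1) = (1 - q) ^ (-ν) := by
    calc (1 - q) * a * a ^ (2 * ν + 1)
        = (1 - q) * a ^ 2 * (a ^ 2) ^ ν := by
          rw [Real.rpow_add_one ha.ne', ← Nat.cast_two, Real.rpow_natCast_mul ha.le]
          ring
      _ = (1 - q) ^ (-ν) := by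
          rw [ha_sq, mul_inv_cancel₀ h1q.ne', one_mul, Real.inv_rpow h1q.le, Real.rpow_neg h1q.le]
  have hweight (k : ℕ) : (q ^ k) ^ (2 * ν + 1) * q ^ k = ((q ^ 2) ^ (ν + 1)) ^ k := by
    simp only [← Real.rpow_natCast, ← Real.rpow_mul hq0.le, ← Real.rpow_add hq0]
    congr 1
    push_cast
    ring
  have hnode (k : ℕ) : (1 - q) * (q ^ k * a) ^ 2 = (q ^ 2) ^ k := by
    rw [mul_pow, ha_sq, mul_left_comm, mul_inv_cancel₀ h1q.ne', mul_one, pow_right_comm]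
  rw [jackson, ← ha_rpow, mul_assoc _ (a ^ _), ← tsum_mul_left (a := a ^ _)]
  congr 1
  refine tsum_congr fun k => ?_
  rw [hnode, Real.mul_rpow (by positivity) ha.le, ← hweight]
  ring

lemma qHankel_integrand_eq (hq0 : 0 < q) (hq1 : q < 1) {ν : ℝ} (hν : -1 < ν) (j : ℕ) {r t : ℝ}
    (hr : 0 < r) (ht : 0 < t) :
    qBessel1 q ν (r * t) / (r * t) ^ ν * r ^ (2 * ν + 1) *
        (qLaguerre q ν j (r ^ 2 / (1 + q)) * qExpE (q ^ 2) (-(r ^ 2 / (1 + q)))) =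
      r ^ (2 * ν + 1) * (((1 + q) ^ ν * qGamma (q ^ 2) (ν + 1))⁻¹ *
        (qPochInf ((1 - q) * r ^ 2) (q ^ 2) *
          littleLaguerre (q ^ 2) ((q ^ 2) ^ (ν + 1)) j ((1 - q) * r ^ 2) *
          besselSeries (q ^ 2) ((q ^ 2) ^ (ν + 1)) ((1 - q) * t ^ 2 * ((1 - q) * r ^ 2)))) := by
  have hp : |q ^ 2| < 1 := by
    rw [abs_of_pos (by positivity)]
    exact pow_lt_one₀ hq0.le hq1 two_ne_zero
  have hnode : (1 - q ^ 2) * (r ^ 2 / (1 + q)) = (1 - q) * r ^ 2 := by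
    field_simp
    ring
  have harg : ((1 - q) * (r * t)) ^ 2 = (1 - q) * t ^ 2 * ((1 - q) * r ^ 2) := by ring
  have := (Real.rpow_pos_of_pos (mul_pos hr ht) ν).ne'
  rw [qBessel1_eq_besselSeries hq0 hq1 hν, qLaguerre_eq_littleLaguerre hq0 hq1,
    qExpE_eq_qPochInf hp, mul_neg, neg_neg, hnode, harg,
    Real.div_rpow (by positivity) (by positivity)]
  field

lemma rpow_neg_mul_inv_rpow_mul_qGamma (hq0 : 0 < q) (hq1 : q < 1) {ν : ℝ} (hν : -1 < ν) :
    (1 - q) ^ (-ν) * ((1 + q) ^ ν * qGamma (q ^ 2) (ν + 1))⁻¹ =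
      (qPochInf (q ^ 2) (q ^ 2) / qPochInf ((q ^ 2) ^ (ν + 1)) (q ^ 2))⁻¹ := by
  have h1q : 0 < 1 - q := sub_pos.2 hq1
  have h1p : 1 - q ^ 2 = (1 - q) * (1 + q) := by ring
  have := (Real.rpow_pos_of_pos h1q ν).ne'
  have : (1 + q) ^ ν ≠ 0 := by positivity
  rw [qGamma_eq_qPochInf_div (by positivity) (pow_lt_one₀ hq0.le hq1 two_ne_zero) (by linarith),
    sub_add_cancel_right, h1p, Real.mul_rpow h1q.le (by positivity), Real.rpow_neg h1q.le,
    Real.rpow_neg (by positivity)]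
  field

lemma jackson_qHankel_integrand_eq_tsum (hq0 : 0 < q) (hq1 : q < 1) {ν : ℝ} (hν : -1 < ν) (j : ℕ)
    {t : ℝ} (ht : 0 < t) :
    jackson q (1 / √(1 - q)) (fun r => qBessel1 q ν (r * t) / (r * t) ^ ν * r ^ (2 * ν + 1) *
        (qLaguerre q ν j (r ^ 2 / (1 + q)) * qExpE (q ^ 2) (-(r ^ 2 / (1 + q))))) =
      (qPochInf (q ^ 2) (q ^ 2) / qPochInf ((q ^ 2) ^ (ν + 1)) (q ^ 2))⁻¹ *
        ∑' k : ℕ, ((q ^ 2) ^ (ν + 1)) ^ k * qPochInf ((q ^ 2) ^ k) (q ^ 2) *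
          littleLaguerre (q ^ 2) ((q ^ 2) ^ (ν + 1)) j ((q ^ 2) ^ k) *
          besselSeries (q ^ 2) ((q ^ 2) ^ (ν + 1)) ((1 - q) * t ^ 2 * (q ^ 2) ^ k) := by
  have : 0 < 1 - q := sub_pos.2 hq1
  rw [jackson_congr hq0 (by positivity) fun r hr => qHankel_integrand_eq hq0 hq1 hν j hr ht,
    jackson_rpow_mul_comp_sq hq0 hq1 ν fun x => _ * (qPochInf x _ * littleLaguerre _ _ j x *
      besselSeries _ _ (_ * x)), ← rpow_neg_mul_inv_rpow_mul_qGamma hq0 hq1 hν, mul_assoc,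
    ← tsum_mul_left (a := (_ * qGamma _ _)⁻¹)]
  congr 1
  exact tsum_congr fun k => by ring

lemma rpow_two_mul_succ_mul_add (hq : 0 < q) (ν : ℝ) (j : ℕ) :
    q ^ (2 * ((j : ℝ) + 1) * (j + ν + 1)) =
      ((q ^ 2) ^ (ν + 1)) ^ (j + 1) * (q ^ 2) ^ (j * (j + 1)) := by
  simp only [← Real.rpow_natCast, ← Real.rpow_mul hq.le, ← Real.rpow_add hq]
  congr 1
  push_cast
  ring

lemma qHankel_image_eq (hq0 : 0 < q) (hq1 : q < 1) (ν : ℝ) (j : ℕ) (t : ℝ) :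
    q ^ (2 * ((j : ℝ) + 1) * (j + ν + 1)) / qFact (q ^ 2) j * (t ^ (2 * j) / (1 + q) ^ j) *
        qExpe (q ^ 2) (q ^ 2 * t ^ 2 / (1 + q)) =
      ((1 - q) * t ^ 2) ^ j * ((q ^ 2) ^ (ν + 1)) ^ (j + 1) * (q ^ 2) ^ (j * (j + 1)) /
        qPoch (q ^ 2) (q ^ 2) j * (qPochInf (-((1 - q) * t ^ 2 * q ^ 2)) (q ^ 2))⁻¹ := by
  have hp : |q ^ 2| < 1 := by
    rw [abs_of_pos (by positivity)]
    exact pow_lt_one₀ hq0.le hq1 two_ne_zero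
  have hbase : (1 - q ^ 2) * (t ^ 2 / (1 + q)) = (1 - q) * t ^ 2 := by
    field_simp
    ring
  have hexp : (1 - q ^ 2) * (q ^ 2 * t ^ 2 / (1 + q)) = (1 - q) * t ^ 2 * q ^ 2 := by
    rw [← hbase]
    ring
  have hpow : (1 - q ^ 2) ^ j * (t ^ (2 * j) / (1 + q) ^ j) = ((1 - q) * t ^ 2) ^ j := by
    rw [← hbase, mul_pow, div_pow, pow_mul]
  rw [qExpe, qExpE_eq_qPochInf hp, hexp, rpow_two_mul_succ_mul_add hq0, qFact_eq_qPoch_div, ← hpow]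
  field

lemma one_sub_mul_sq_lt_one (hq : q < 1) {t : ℝ} (ht0 : 0 ≤ t) (ht1 : t < 1 / √(1 - q)) :
    (1 - q) * t ^ 2 < 1 := by
  have h1q : 0 < 1 - q := sub_pos.2 hq
  have hlt : t * √(1 - q) < 1 := (lt_div_iff₀ (Real.sqrt_pos.2 h1q)).1 ht1
  rw [← Real.sq_sqrt h1q.le, mul_comm, ← mul_pow]
  exact pow_lt_one₀ (by positivity) hlt two_ne_zero

end Translation

/-- first q-Hankel image of a q-Laguerre function: for `ν > -1`, `j ∈ ℕ` and
`0 < t < 1/√(1-q)`,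
`∫_0^{1/√(1-q)} d_q r (J^{(1)}_ν(rt|q²)/(rt)^ν) r^{2ν+1} 𝓛^{(ν)}_j(r²/(1+q)|q²) E_{q²}(-r²/(1+q))
 = (q^{2(j+1)(j+ν+1)}/[j]_{q²}!) (t^{2j}/(1+q)^j) e_{q²}(-q²t²/(1+q))`. -/
theorem hankel1_qLaguerre (q : ℝ) (hq0 : 0 < q) (hq1 : q < 1)
    (ν : ℝ) (hν : ν > -1) (j : ℕ) (t : ℝ) (ht0 : 0 < t)
    (ht1 : t < 1 / Real.sqrt (1 - q)) :
    jackson q (1 / Real.sqrt (1 - q))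
      (fun r => qBessel1 q ν (r * t) / (r * t) ^ ν * r ^ (2 * ν + 1) *
        (qLaguerre q ν j (r ^ 2 / (1 + q)) * qExpE (q ^ 2) (-(r ^ 2 / (1 + q))))) =
      q ^ (2 * ((j : ℝ) + 1) * ((j : ℝ) + ν + 1)) / qFact (q ^ 2) j *
        (t ^ (2 * j) / (1 + q) ^ j) * qExpe (q ^ 2) (q ^ 2 * t ^ 2 / (1 + q)) := by
  have : 0 < 1 - q := sub_pos.2 hq1
  have hp1 : q ^ 2 < 1 := pow_lt_one₀ hq0.le hq1 two_ne_zero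
  have hp : |q ^ 2| < 1 := by rwa [abs_of_pos (by positivity)]
  have hb := abs_rpow_lt_one (sq_nonneg q) hp1 (neg_lt_iff_pos_add.1 hν)
  have hz : |(1 - q) * t ^ 2| < 1 := by
    rw [abs_of_pos (by positivity)]
    exact one_sub_mul_sq_lt_one hq1 ht0.le ht1
  have hpoch := div_ne_zero (qPochInf_ne_zero hp hp) (qPochInf_ne_zero hp hb)
  rw [jackson_qHankel_integrand_eq_tsum hq0 hq1 hν j ht0,
    tsum_littleLaguerre_mul_besselSeries hp hb hz, inv_mul_cancel_left₀ hpoch,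
    qHankel_image_eq hq0 hq1]
end
end

section
/- Inversion of the q-Hankel transforms: fix an integer m ≥ 1 and set μ = 1 + q^{2−m}. Let ν ≥ −1/2, let α, γ > 0, let p be a real polynomial, and define f(s) = p(s²)·e_{q²}(−αq²s²/μ) for s > 0. Let g(r) = 𝓗^{q,γ}_ν[f](r) for r > 0 (the bilateral series defining this infinite Jackson integral converges absolutely). Then for every real t with 0 < t < √(μ/(α(1−q²))), 𝓗̄^{q,1/α}_ν[g](t) = d · f(t), where d = ( q^{ν(ν+1)} / Γ_{q²}(ν+1) ) · ∫_0^{(αγ²/μ)·∞} d_{q²}u · u^ν e_{q²}(−u). -/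
open scoped BigOperators

noncomputable section

/-!
The Gaussians `s ↦ e_{q²}(-α q^{2j} q² s² / μ)`, `j ∈ ℕ`, span all functions
`p(s²) e_{q²}(-α q² s² / μ)`, since `e_q(-q z) - e_q(-z) = (1 - q) z e_q(-z)`. So it suffices to
invert the transforms on one Gaussian. Expanding the Bessel kernel and integrating term by term
against the moments of `e_{q²}(-q² u)` shows that the second transform maps it to a multiple of
`E_{q²}(-r² / (μ α q^{2j}))`; expanding again, now against the moments of `E_{q²}(-u)`, which are
values of `Γ_{q²}`, shows that the first transform maps this back to the Gaussian. The upper limit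
of the first transform depends on `α` only, yet it suits every `j`, because `E_q(-u)` vanishes at
the points `u = q^{-i} / (1 - q)`; and the constant `d` does not depend on `j`, because the
bilateral lattice is invariant under multiplication by its base.
-/

open Filter Topology

section QExponential

variable {q : ℝ}

lemma qFact_zero : qFact q 0 = 1 := by simp [qFact]

lemma qFact_succ (n : ℕ) : qFact q (n + 1) = qFact q n * ((1 - q ^ (n + 1)) / (1 - q)) := by
  have hnum : qNum q ((n : ℝ) + 1) = (1 - q ^ (n + 1)) / (1 - q) := by
    rw [qNum, ← neg_div_neg_eq, neg_sub, neg_sub, ← Nat.cast_add_one, Real.rpow_natCast]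
  rw [qFact, Finset.prod_range_succ, hnum, qFact]

lemma one_sub_pow_succ_pos (hq0 : 0 < q) (hq1 : q < 1) (n : ℕ) : 0 < 1 - q ^ (n + 1) :=
  sub_pos.2 (pow_lt_one₀ hq0.le hq1 n.succ_ne_zero)

lemma qFact_pos (hq0 : 0 < q) (hq1 : q < 1) (n : ℕ) : 0 < qFact q n := by
  induction n with
  | zero => simp [qFact_zero]
  | succ n ih =>
    rw [qFact_succ]
    exact mul_pos ih (div_pos (one_sub_pow_succ_pos hq0 hq1 n) (sub_pos.2 hq1))

lemma summable_of_succ_eq_mul {f ρ : ℕ → ℝ} {l : ℝ} (hl : |l| < 1)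
    (hρ : Tendsto ρ atTop (𝓝 l)) (hf : ∀ n, f (n + 1) = ρ n * f n) : Summable f := by
  obtain ⟨r, hlr, hr⟩ := exists_between hl
  refine summable_of_ratio_norm_eventually_le hr ?_
  filter_upwards [hρ.abs.eventually_le_const hlr] with n hn
  rw [hf, norm_mul, Real.norm_eq_abs (ρ n)]
  gcongr

lemma tendsto_div_one_sub_pow_succ (hq0 : 0 < q) (hq1 : q < 1) (z : ℝ) :
    Tendsto (fun n : ℕ => z * (1 - q) / (1 - q ^ (n + 1))) atTop (𝓝 (z * (1 - q))) := by
  have hpow := (tendsto_pow_atTop_nhds_zero_of_lt_one hq0.le hq1).comp (tendsto_add_atTop_nat 1)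
  have hlim := (tendsto_const_nhds (x := z * (1 - q))).div (hpow.const_sub 1) (by norm_num)
  rwa [sub_zero, div_one] at hlim

/-- The power series `∑ z ^ j / [j]_q!` of the small `q`-exponential `e_q(z)`; unlike `qExpe`, it
represents `e_q` only for `|z| < 1 / (1 - q)`, but `z` may have either sign. -/
def qExpSeries (q z : ℝ) : ℝ := ∑' j : ℕ, z ^ j / qFact q j

lemma summable_qExpSeries (hq0 : 0 < q) (hq1 : q < 1) {z : ℝ} (hz : |z| < 1 / (1 - q)) :
    Summable (fun j : ℕ => z ^ j / qFact q j) := by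
  have h1q : 0 < 1 - q := sub_pos.2 hq1
  refine summable_of_succ_eq_mul (l := z * (1 - q)) ?_ (tendsto_div_one_sub_pow_succ hq0 hq1 z)
    fun n => ?_
  · rwa [abs_mul, abs_of_pos h1q, ← lt_div_iff₀ h1q]
  · have := one_sub_pow_succ_pos hq0 hq1 n
    rw [qFact_succ]
    field_simp
    ring

lemma summable_qExpE (hq0 : 0 < q) (hq1 : q < 1) (z : ℝ) :
    Summable (fun j : ℕ => q ^ (j * (j - 1) / 2) * z ^ j / qFact q j) := by
  have hratio := (tendsto_pow_atTop_nhds_zero_of_lt_one hq0.le hq1).mul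
    (tendsto_div_one_sub_pow_succ hq0 hq1 z)
  refine summable_of_succ_eq_mul (by simp) hratio fun n => ?_
  rw [qFact_succ, Nat.triangle_succ]
  field_simp
  ring

lemma qExpE_eq_mul_qExpE_mul (hq0 : 0 < q) (hq1 : q < 1) (z : ℝ) :
    qExpE q z = (1 + (1 - q) * z) * qExpE q (q * z) := by
  have hz := summable_qExpE hq0 hq1 z
  have hqz := summable_qExpE hq0 hq1 (q * z)
  have hdiff : qExpE q z - qExpE q (q * z) = (1 - q) * z * qExpE q (q * z) := by
    unfold qExpE
    rw [← hz.tsum_sub hqz, (hz.sub hqz).tsum_eq_zero_add, ← tsum_mul_left]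
    simp only [Nat.zero_mul, Nat.zero_div, pow_zero, sub_self, zero_add]
    refine tsum_congr fun j => ?_
    have := one_sub_pow_succ_pos hq0 hq1 j
    rw [qFact_succ, Nat.triangle_succ]
    field_simp
    ring
  linarith

lemma abs_mul_lt_of_le_one {w z b : ℝ} (hw0 : 0 ≤ w) (hw1 : w ≤ 1) (hz : |z| < b) :
    |w * z| < b := by
  rw [abs_mul, abs_of_nonneg hw0]
  exact (mul_le_of_le_one_left (abs_nonneg z) hw1).trans_lt hz

lemma qExpSeries_mul (hq0 : 0 < q) (hq1 : q < 1) {z : ℝ} (hz : |z| < 1 / (1 - q)) :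
    qExpSeries q (q * z) = (1 - (1 - q) * z) * qExpSeries q z := by
  have hsz := summable_qExpSeries hq0 hq1 hz
  have hsqz := summable_qExpSeries hq0 hq1 (abs_mul_lt_of_le_one hq0.le hq1.le hz)
  have hdiff : qExpSeries q z - qExpSeries q (q * z) = (1 - q) * z * qExpSeries q z := by
    unfold qExpSeries
    rw [← hsz.tsum_sub hsqz, (hsz.sub hsqz).tsum_eq_zero_add, ← tsum_mul_left]
    simp only [pow_zero, sub_self, zero_add]
    refine tsum_congr fun j => ?_
    have := one_sub_pow_succ_pos hq0 hq1 j
    rw [qFact_succ]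
    field_simp
    ring
  linarith

lemma tendsto_tsum_mul_geometric_pow_s12 (hq0 : 0 < q) (hq1 : q < 1) {a : ℕ → ℝ} {z : ℝ}
    (hs : Summable (fun j => a j * z ^ j)) :
    Tendsto (fun N : ℕ => ∑' j, a j * (q ^ N * z) ^ j) atTop (𝓝 (a 0)) := by
  have hlim := tendsto_tsum_of_dominated_convergence (𝓕 := atTop)
    (f := fun (N : ℕ) (j : ℕ) => a j * (q ^ N * z) ^ j)
    (g := fun j => a j * (0 * z) ^ j) hs.norm
    (fun j => (((tendsto_pow_atTop_nhds_zero_of_lt_one hq0.le hq1).mul_const z).pow j).const_mul _)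
    (Eventually.of_forall fun N j => ?_)
  · rwa [tsum_eq_single 0 fun j hj => by simp [hj], pow_zero, mul_one] at hlim
  · rw [norm_mul, norm_mul, norm_pow, norm_pow, norm_mul, norm_pow, Real.norm_of_nonneg hq0.le]
    gcongr
    exact mul_le_of_le_one_left (norm_nonneg z) (pow_le_one₀ hq0.le hq1.le)

lemma tendsto_qExpE_geometric (hq0 : 0 < q) (hq1 : q < 1) (z : ℝ) :
    Tendsto (fun N : ℕ => qExpE q (q ^ N * z)) atTop (𝓝 1) := by
  have hlim := tendsto_tsum_mul_geometric_pow_s12 hq0 hq1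
    (a := fun j => q ^ (j * (j - 1) / 2) / qFact q j) (z := z)
    ((summable_qExpE hq0 hq1 z).congr fun j => by ring)
  simpa [qExpE, qFact_zero, mul_div_right_comm] using hlim

lemma tendsto_qExpSeries_geometric (hq0 : 0 < q) (hq1 : q < 1) {z : ℝ}
    (hz : |z| < 1 / (1 - q)) :
    Tendsto (fun N : ℕ => qExpSeries q (q ^ N * z)) atTop (𝓝 1) := by
  have hlim := tendsto_tsum_mul_geometric_pow_s12 hq0 hq1 (a := fun j => (qFact q j)⁻¹) (z := z)
    ((summable_qExpSeries hq0 hq1 hz).congr fun j => by ring)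
  simpa [qExpSeries, qFact_zero, div_eq_inv_mul] using hlim

-- The product is invariant under `z ↦ q z`, hence equal to its limit along `q ^ N * z`.
lemma qExpSeries_mul_qExpE_neg (hq0 : 0 < q) (hq1 : q < 1) {z : ℝ} (hz : |z| < 1 / (1 - q)) :
    qExpSeries q z * qExpE q (-z) = 1 := by
  have hinv (N : ℕ) : qExpSeries q (q ^ N * z) * qExpE q (q ^ N * -z) =
      qExpSeries q z * qExpE q (-z) := by
    induction N with
    | zero => simp
    | succ N ih =>
      have hN := abs_mul_lt_of_le_one (pow_nonneg hq0.le N) (pow_le_one₀ hq0.le hq1.le) hz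
      rw [← ih, qExpE_eq_mul_qExpE_mul hq0 hq1 (q ^ N * -z), pow_succ', mul_assoc, mul_assoc,
        qExpSeries_mul hq0 hq1 hN]
      ring
  have hlim := (tendsto_qExpSeries_geometric hq0 hq1 hz).mul (tendsto_qExpE_geometric hq0 hq1 (-z))
  simp only [hinv, one_mul] at hlim
  exact tendsto_nhds_unique tendsto_const_nhds hlim

lemma qExpSeries_neg_eq_qExpe (hq0 : 0 < q) (hq1 : q < 1) {z : ℝ} (hz : |z| < 1 / (1 - q)) :
    qExpSeries q (-z) = qExpe q z := by
  have := qExpSeries_mul_qExpE_neg hq0 hq1 ((abs_neg z).trans_lt hz)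
  rw [neg_neg] at this
  exact eq_inv_of_mul_eq_one_left this

lemma qExpE_neg_pos (hq0 : 0 < q) (hq1 : q < 1) {z : ℝ} (hz0 : 0 ≤ z) (hz : z < 1 / (1 - q)) :
    0 < qExpE q (-z) := by
  have habs : |z| < 1 / (1 - q) := by rwa [abs_of_nonneg hz0]
  have hterm (j : ℕ) : 0 ≤ z ^ j / qFact q j := div_nonneg (pow_nonneg hz0 j)
    (qFact_pos hq0 hq1 j).le
  have hnonneg : 0 ≤ qExpSeries q z := tsum_nonneg hterm
  exact pos_of_mul_pos_right (by rw [qExpSeries_mul_qExpE_neg hq0 hq1 habs]; exact one_pos) hnonneg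

lemma qExpE_neg_inv_pow_div_eq_zero (hq0 : 0 < q) (hq1 : q < 1) (j : ℕ) :
    qExpE q (-((q ^ j)⁻¹ / (1 - q))) = 0 := by
  have h1q : 0 < 1 - q := sub_pos.2 hq1
  rw [qExpE_eq_mul_qExpE_mul hq0 hq1]
  induction j with
  | zero => rw [show 1 + (1 - q) * -((q ^ 0)⁻¹ / (1 - q)) = 0 by field_simp; simp, zero_mul]
  | succ j ih =>
    rw [show q * -((q ^ (j + 1))⁻¹ / (1 - q)) = -((q ^ j)⁻¹ / (1 - q)) by field_simp; ring,
      qExpE_eq_mul_qExpE_mul hq0 hq1, ih, mul_zero]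

lemma le_qExpE (hq0 : 0 < q) (hq1 : q < 1) {z : ℝ} (hz : 0 ≤ z) (j : ℕ) :
    q ^ (j * (j - 1) / 2) * z ^ j / qFact q j ≤ qExpE q z :=
  (summable_qExpE hq0 hq1 z).le_tsum j fun i _ =>
    div_nonneg (by positivity) (qFact_pos hq0 hq1 i).le

lemma one_le_qExpE (hq0 : 0 < q) (hq1 : q < 1) {z : ℝ} (hz : 0 ≤ z) : 1 ≤ qExpE q z := by
  simpa [qFact_zero] using le_qExpE hq0 hq1 hz 0

lemma qExpe_nonneg (hq0 : 0 < q) (hq1 : q < 1) {z : ℝ} (hz : 0 ≤ z) : 0 ≤ qExpe q z :=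
  inv_nonneg.2 (zero_le_one.trans (one_le_qExpE hq0 hq1 hz))

lemma qExpe_le_div_pow (hq0 : 0 < q) (hq1 : q < 1) {z : ℝ} (hz : 0 < z) (j : ℕ) :
    qExpe q z ≤ qFact q j / q ^ (j * (j - 1) / 2) / z ^ j := by
  have := qFact_pos hq0 hq1 j
  rw [div_div, ← inv_div]
  exact inv_anti₀ (by positivity) (le_qExpE hq0 hq1 hz.le j)

lemma qExpe_mul (hq0 : 0 < q) (hq1 : q < 1) {z : ℝ} (hz : 0 ≤ z) :
    qExpe q (q * z) = (1 + (1 - q) * z) * qExpe q z := by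
  have : 0 < 1 + (1 - q) * z := by positivity
  rw [qExpe, qExpe, qExpE_eq_mul_qExpE_mul hq0 hq1 z, mul_inv, mul_inv_cancel_left₀ this.ne']

lemma eval_sq_mul_qExpe_mem_span (hq0 : 0 < q) (hq1 : q < 1) {b : ℝ} (hb : 0 < b)
    (p : Polynomial ℝ) :
    (fun s => p.eval (s ^ 2) * qExpe q (b * s ^ 2)) ∈
      Submodule.span ℝ (Set.range fun (j : ℕ) (s : ℝ) => qExpe q (q ^ j * b * s ^ 2)) := by
  have h1q : 0 < 1 - q := sub_pos.2 hq1
  suffices hall : ∀ j : ℕ, (fun s => p.eval (s ^ 2) * qExpe q (q ^ j * b * s ^ 2)) ∈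
      Submodule.span ℝ (Set.range fun (j : ℕ) (s : ℝ) => qExpe q (q ^ j * b * s ^ 2)) by
    simpa using hall 0
  induction p using Polynomial.induction_on with
  | C a =>
    intro j
    simp only [Polynomial.eval_C]
    exact Submodule.smul_mem _ a (Submodule.subset_span (Set.mem_range_self j))
  | add p p' hp hp' =>
    intro j
    simp only [Polynomial.eval_add, add_mul]
    exact Submodule.add_mem _ (hp j) (hp' j)
  | monomial n a ih =>
    intro j
    have hdiff := Submodule.smul_mem _ ((1 - q) * (q ^ j * b))⁻¹
      (Submodule.sub_mem _ (ih (j + 1)) (ih j))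
    convert hdiff using 1
    funext s
    have hstep := qExpe_mul hq0 hq1 (show 0 ≤ q ^ j * b * s ^ 2 by positivity)
    rw [show q * (q ^ j * b * s ^ 2) = q ^ (j + 1) * b * s ^ 2 by ring] at hstep
    simp only [Pi.smul_apply, Pi.sub_apply, smul_eq_mul, hstep, Polynomial.eval_mul,
      Polynomial.eval_C, Polynomial.eval_pow, Polynomial.eval_X]
    field_simp
    ring

end QExponential

section QGamma

variable {q : ℝ}

lemma hasProd_qExpE (hq0 : 0 < q) (hq1 : q < 1) (z : ℝ) :
    HasProd (fun k : ℕ => 1 + (1 - q) * (q ^ k * z)) (qExpE q z) := by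
  have hsum : Summable fun k : ℕ => (1 - q) * (q ^ k * z) :=
    ((summable_geometric_of_lt_one hq0.le hq1).mul_right z).mul_left (1 - q)
  have hprod := (Real.multipliable_one_add_of_summable hsum).hasProd
  have hpartial (N : ℕ) :
      (∏ k ∈ Finset.range N, (1 + (1 - q) * (q ^ k * z))) * qExpE q (q ^ N * z) = qExpE q z := by
    induction N with
    | zero => simp
    | succ N ih =>
      rw [← ih, qExpE_eq_mul_qExpE_mul hq0 hq1 (q ^ N * z), Finset.prod_range_succ, pow_succ',
        mul_assoc q, mul_assoc]
  have hlim := hprod.tendsto_prod_nat.mul (tendsto_qExpE_geometric hq0 hq1 z)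
  simp only [hpartial, mul_one] at hlim
  rwa [tendsto_nhds_unique tendsto_const_nhds hlim]

lemma rpow_div_one_sub_lt (hq0 : 0 < q) (hq1 : q < 1) {a : ℝ} (ha : 0 < a) :
    q ^ a / (1 - q) < 1 / (1 - q) :=
  div_lt_div_of_pos_right (Real.rpow_lt_one hq0.le hq1 ha) (sub_pos.2 hq1)

lemma qExpE_neg_rpow_div_pos (hq0 : 0 < q) (hq1 : q < 1) {a : ℝ} (ha : 0 < a) :
    0 < qExpE q (-(q ^ a / (1 - q))) := by
  exact qExpE_neg_pos hq0 hq1 (by positivity) (rpow_div_one_sub_lt hq0 hq1 ha)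

lemma hasProd_one_sub_rpow_add (hq0 : 0 < q) (hq1 : q < 1) (a : ℝ) :
    HasProd (fun k : ℕ => 1 - q ^ ((k : ℝ) + a)) (qExpE q (-(q ^ a / (1 - q)))) := by
  have : 1 - q ≠ 0 := (sub_pos.2 hq1).ne'
  convert hasProd_qExpE hq0 hq1 (-(q ^ a / (1 - q))) using 2 with k
  rw [Real.rpow_add hq0, Real.rpow_natCast]
  field_simp
  ring

lemma qGamma_eq (hq0 : 0 < q) (hq1 : q < 1) {a : ℝ} (ha : 0 < a) :
    qGamma q a = (1 - q) ^ (1 - a) *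
      (qExpE q (-(q / (1 - q))) / qExpE q (-(q ^ a / (1 - q)))) := by
  have hnum := hasProd_one_sub_rpow_add hq0 hq1 1
  have hden := hasProd_one_sub_rpow_add hq0 hq1 a
  have hquot : HasProd (fun k : ℕ => (1 - q ^ ((k : ℝ) + 1)) / (1 - q ^ ((k : ℝ) + a)))
      (qExpE q (-(q ^ (1 : ℝ) / (1 - q))) / qExpE q (-(q ^ a / (1 - q)))) := by
    simp only [HasProd, Finset.prod_div_distrib]
    exact Filter.Tendsto.div hnum hden (qExpE_neg_rpow_div_pos hq0 hq1 ha).ne'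
  rw [Real.rpow_one] at hquot
  rw [qGamma, ← hquot.tprod_eq]
  norm_cast

lemma qGamma_pos (hq0 : 0 < q) (hq1 : q < 1) {a : ℝ} (ha : 0 < a) : 0 < qGamma q a := by
  have hnum := qExpE_neg_rpow_div_pos hq0 hq1 one_pos
  have hden := qExpE_neg_rpow_div_pos hq0 hq1 ha
  rw [Real.rpow_one] at hnum
  rw [qGamma_eq hq0 hq1 ha]
  positivity

lemma qGamma_add_one (hq0 : 0 < q) (hq1 : q < 1) {a : ℝ} (ha : 0 < a) :
    qGamma q (a + 1) = (1 - q ^ a) / (1 - q) * qGamma q a := by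
  have h1q : 0 < 1 - q := sub_pos.2 hq1
  have hqa : 0 < 1 - q ^ a := sub_pos.2 (Real.rpow_lt_one hq0.le hq1 ha)
  have hE : qExpE q (-(q ^ a / (1 - q))) =
      (1 - q ^ a) * qExpE q (-(q ^ (a + 1) / (1 - q))) := by
    rw [qExpE_eq_mul_qExpE_mul hq0 hq1, Real.rpow_add_one hq0.ne']
    congr 2 <;> field_simp
  rw [qGamma_eq hq0 hq1 ha, qGamma_eq hq0 hq1 (add_pos ha one_pos), hE,
    show 1 - (a + 1) = 1 - a - 1 by ring, Real.rpow_sub_one h1q.ne']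
  field_simp

end QGamma

section Jackson

lemma hasSum_tsum_mul_of_nonneg {κ ι : Type*} {a m : ι → ℝ} {W : κ → ι → ℝ} {S : ℝ}
    (hW : ∀ k i, 0 ≤ W k i) (hm : ∀ i, HasSum (fun k => W k i) (m i))
    (ha : HasSum (fun i => a i * m i) S) : HasSum (fun k => ∑' i, a i * W k i) S := by
  have habs : Summable (fun p : ι × κ => |a p.1| * W p.2 p.1) := by
    refine (summable_prod_of_nonneg fun p => mul_nonneg (abs_nonneg _) (hW _ _)).2
      ⟨fun i => (hm i).summable.mul_left |a i|, ha.summable.abs.congr fun i => ?_⟩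
    simp only [tsum_mul_left, (hm i).tsum_eq]
    rw [abs_mul, abs_of_nonneg ((hm i).nonneg fun k => hW k i)]
  have hprod : Summable (fun p : ι × κ => a p.1 * W p.2 p.1) :=
    Summable.of_norm <| habs.congr fun p => by
      rw [norm_mul, Real.norm_eq_abs, Real.norm_of_nonneg (hW _ _)]
  have hcomm : ∑' (k : κ) (i : ι), a i * W k i = S := by
    rw [hprod.tsum_comm (f := fun i k => a i * W k i), ← ha.tsum_eq]
    exact tsum_congr fun i => by rw [tsum_mul_left, (hm i).tsum_eq]
  exact hcomm ▸ hprod.prod_symm.prod.hasSum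

/-- The Jackson `q`-integral of `f` over the lattice `x` converges absolutely to `I`. The lattice
`x k = q ^ k * a` gives `∫_0^a f(t) d_q t` for `k : ℕ` and `∫_0^{a·∞} f(t) d_q t` for `k : ℤ`. -/
def HasJackson {κ : Type*} (q : ℝ) (x : κ → ℝ) (f : ℝ → ℝ) (I : ℝ) : Prop :=
  HasSum (fun k => (1 - q) * x k * f (x k)) I

variable {κ : Type*} {q : ℝ} {x : κ → ℝ} {f g : ℝ → ℝ} {I I' : ℝ}

namespace HasJackson

lemma congr (h : HasJackson q x f I) (hfg : ∀ k, g (x k) = f (x k)) : HasJackson q x g I := by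
  simpa only [HasJackson, hfg] using h

lemma const_mul (b : ℝ) (h : HasJackson q x f I) : HasJackson q x (fun u => b * f u) (b * I) :=
  (HasSum.mul_left b h).congr_fun fun k => by ring

lemma add (hf : HasJackson q x f I) (hg : HasJackson q x g I') :
    HasJackson q x (fun u => f u + g u) (I + I') :=
  (HasSum.add hf hg).congr_fun fun k => by ring

lemma jacksonInf_eq {c : ℝ} (h : HasJackson q (fun k : ℤ => q ^ k * c) f I) :
    jacksonInf q c f = I := by
  rw [jacksonInf, ← tsum_mul_left, ← HasSum.tsum_eq h]
  exact tsum_congr fun k => by ring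

lemma comp_base_mul {c : ℝ} (hq : q ≠ 0) (h : HasJackson q (fun k : ℤ => q ^ k * c) f I) :
    HasJackson q (fun k : ℤ => q ^ k * c) (fun u => f (q * u)) (I / q) := by
  refine (((Equiv.addRight (1 : ℤ)).hasSum_iff.2 h).div_const q).congr_fun fun k => ?_
  simp only [Function.comp_apply, Equiv.coe_addRight, zpow_add_one₀ hq]
  rw [show q ^ k * q * c = q * (q ^ k * c) by ring]
  field_simp

lemma comp_mul_sq {b ν : ℝ} (hq : 0 < 1 + q) (hx : ∀ k, 0 < x k) (hb : 0 < b)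
    (h : HasJackson (q ^ 2) (fun k => b * x k ^ 2) (fun u => u ^ ν * f u) I) :
    HasJackson q x (fun r => r ^ (2 * ν + 1) * f (b * r ^ 2)) (I / ((1 + q) * b ^ (ν + 1))) := by
  refine (HasSum.div_const h ((1 + q) * b ^ (ν + 1))).congr_fun fun k => ?_
  have hxk := hx k
  beta_reduce
  rw [Real.mul_rpow hb.le (by positivity), Real.rpow_add_one hb.ne', Real.rpow_add_one hxk.ne',
    Real.rpow_mul hxk.le, Real.rpow_two]
  field_simp
  ring

lemma tsum_mul_rpow_add {ν : ℝ} {w : ℝ → ℝ} {a m : ℕ → ℝ} (hq : q ≤ 1) (hx : ∀ k, 0 < x k)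
    (hw : ∀ k, 0 ≤ w (x k)) (hm : ∀ i : ℕ, HasJackson q x (fun u => u ^ (ν + i) * w u) (m i))
    (ha : HasSum (fun i => a i * m i) I) :
    HasJackson q x (fun u => u ^ ν * ((∑' i, a i * u ^ i) * w u)) I := by
  have hterm (k : κ) (i : ℕ) : 0 ≤ (1 - q) * x k * (x k ^ (ν + i) * w (x k)) :=
    mul_nonneg (mul_nonneg (sub_nonneg.2 hq) (hx k).le)
      (mul_nonneg (Real.rpow_nonneg (hx k).le _) (hw k))
  refine (hasSum_tsum_mul_of_nonneg hterm hm ha).congr_fun fun k => ?_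
  beta_reduce
  rw [← tsum_mul_right, ← tsum_mul_left, ← tsum_mul_left]
  refine tsum_congr fun i => ?_
  rw [Real.rpow_add_natCast (hx k).ne']
  ring

end HasJackson

lemma jacksonInf_base_mul (hq : q ≠ 0) (c : ℝ) (f : ℝ → ℝ) :
    jacksonInf q (q * c) f = jacksonInf q c f := by
  rw [jacksonInf, jacksonInf, ← (Equiv.addRight (1 : ℤ)).tsum_eq (fun k => f (q ^ k * c) * q ^ k),
    ← tsum_mul_left, ← tsum_mul_left]
  refine tsum_congr fun k => ?_
  simp only [Equiv.coe_addRight, zpow_add_one₀ hq, mul_assoc]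
  ring

lemma jacksonInf_base_pow_mul (hq : q ≠ 0) (j : ℕ) (c : ℝ) (f : ℝ → ℝ) :
    jacksonInf q (q ^ j * c) f = jacksonInf q c f := by
  induction j with
  | zero => simp
  | succ j ih => rw [pow_succ', mul_assoc, jacksonInf_base_mul hq, ih]

end Jackson

section Moments

variable {q : ℝ}

lemma rpow_zpow_mul (hq0 : 0 < q) {c : ℝ} (hc : 0 < c) (k : ℤ) (a : ℝ) :
    (q ^ k * c) ^ a = (q ^ a) ^ k * c ^ a := by
  rw [Real.mul_rpow (by positivity) hc.le, ← Real.rpow_intCast, ← Real.rpow_intCast,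
    ← Real.rpow_mul hq0.le, ← Real.rpow_mul hq0.le, mul_comm a]

lemma summable_zpow_mul_of_le_rpow (hq0 : 0 < q) (hq1 : q < 1) {c : ℝ} (hc : 0 < c)
    {f : ℝ → ℝ} (hf : ∀ u, 0 < u → 0 ≤ f u) {a b A B : ℝ} (ha : 0 < a) (hb : 0 < b)
    (hA : ∀ u, 0 < u → f u ≤ A * u ^ a) (hB : ∀ u, 0 < u → f u ≤ B * u ^ (-b)) :
    Summable (fun k : ℤ => f (q ^ k * c)) := by
  have hgeom {e : ℝ} (he : 0 < e) (D : ℝ) : Summable (fun n : ℕ => D * (q ^ e) ^ n) :=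
    (summable_geometric_of_lt_one (by positivity) (Real.rpow_lt_one hq0.le hq1 he)).mul_left D
  have hpos (k : ℤ) : 0 < q ^ k * c := by positivity
  refine Summable.of_nat_of_neg
    ((hgeom ha (A * c ^ a)).of_nonneg_of_le (fun n => hf _ (hpos _)) fun n => ?_)
    ((hgeom hb (B * c ^ (-b))).of_nonneg_of_le (fun n => hf _ (hpos _)) fun n => ?_)
  · refine (hA _ (hpos _)).trans_eq ?_
    rw [rpow_zpow_mul hq0 hc, zpow_natCast]
    ring
  · refine (hB _ (hpos _)).trans_eq ?_
    rw [rpow_zpow_mul hq0 hc, Real.rpow_neg hq0.le, inv_zpow', neg_neg, zpow_natCast]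
    ring

/-- The moment `∫_0^{c·∞} u ^ ν e_q(-u) d_q u`, a multiple of `Γ_q(ν + 1)` depending on `c`. -/
def qMoment (q c ν : ℝ) : ℝ := jacksonInf q c (fun u => u ^ ν * qExpe q u)

variable {c ν : ℝ}

lemma hasJackson_qMoment (hq0 : 0 < q) (hq1 : q < 1) (hc : 0 < c) (hν : -1 < ν) :
    HasJackson q (fun k : ℤ => q ^ k * c) (fun u => u ^ ν * qExpe q u) (qMoment q c ν) := by
  obtain ⟨j, hj⟩ := exists_nat_gt (ν + 1)
  have hrpow {u : ℝ} (hu : 0 < u) (i : ℕ) :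
      (1 - q) * u * (u ^ ν * qExpe q u) ≤
        (1 - q) * (qFact q i / q ^ (i * (i - 1) / 2)) * u ^ (ν + 1 - i) :=
    calc (1 - q) * u * (u ^ ν * qExpe q u)
        ≤ (1 - q) * u * (u ^ ν * (qFact q i / q ^ (i * (i - 1) / 2) / u ^ i)) := by
          gcongr
          exact qExpe_le_div_pow hq0 hq1 hu i
      _ = _ := by
          rw [Real.rpow_sub hu, Real.rpow_natCast, Real.rpow_add_one hu.ne']
          ring
  have hsum : Summable fun k : ℤ =>
      (1 - q) * (q ^ k * c) * ((q ^ k * c) ^ ν * qExpe q (q ^ k * c)) :=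
    summable_zpow_mul_of_le_rpow (f := fun u => (1 - q) * u * (u ^ ν * qExpe q u)) hq0 hq1 hc
      (fun u hu => mul_nonneg (by positivity)
        (mul_nonneg (by positivity) (qExpe_nonneg hq0 hq1 hu.le)))
      (a := ν + 1) (b := j - (ν + 1)) (by linarith) (by linarith)
      (fun u hu => by simpa using hrpow hu 0)
      (fun u hu => by simpa only [neg_sub] using hrpow hu j)
  have hjack : HasJackson q (fun k : ℤ => q ^ k * c) (fun u => u ^ ν * qExpe q u) _ := hsum.hasSum
  rw [qMoment, hjack.jacksonInf_eq]
  exact hjack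

lemma hasJackson_rpow_mul_qExpe_base_mul (hq0 : 0 < q) (hq1 : q < 1) (hc : 0 < c) (hν : -1 < ν) :
    HasJackson q (fun k : ℤ => q ^ k * c) (fun u => u ^ ν * qExpe q (q * u))
      (q ^ (-(ν + 1)) * qMoment q c ν) := by
  have hscaled := ((hasJackson_qMoment hq0 hq1 hc hν).comp_base_mul hq0.ne').const_mul (q ^ (-ν))
  have hvalue : q ^ (-ν) * (qMoment q c ν / q) = q ^ (-(ν + 1)) * qMoment q c ν := by
    rw [neg_add', Real.rpow_sub_one hq0.ne']
    ring
  rw [← hvalue]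
  refine hscaled.congr fun k => ?_
  rw [Real.mul_rpow hq0.le (by positivity), mul_assoc, ← mul_assoc (q ^ (-ν)), ← Real.rpow_add hq0,
    neg_add_cancel, Real.rpow_zero, one_mul]

lemma qMoment_add_one (hq0 : 0 < q) (hq1 : q < 1) (hc : 0 < c) (hν : -1 < ν) :
    qMoment q c (ν + 1) = (q ^ (-(ν + 1)) - 1) / (1 - q) * qMoment q c ν := by
  have h1q : 0 < 1 - q := sub_pos.2 hq1
  have hsplit := (hasJackson_qMoment hq0 hq1 hc hν).add
    ((hasJackson_qMoment hq0 hq1 hc (by linarith : -1 < ν + 1)).const_mul (1 - q))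
  have hsum : HasJackson q (fun k : ℤ => q ^ k * c) (fun u => u ^ ν * qExpe q (q * u))
      (qMoment q c ν + (1 - q) * qMoment q c (ν + 1)) := hsplit.congr fun k => by
    have hu : 0 < q ^ k * c := by positivity
    rw [qExpe_mul hq0 hq1 hu.le, Real.rpow_add_one hu.ne']
    ring
  have hvalue := HasSum.unique (hasJackson_rpow_mul_qExpe_base_mul hq0 hq1 hc hν) hsum
  field_simp
  linarith

lemma qMoment_div_qGamma_add_one (hq0 : 0 < q) (hq1 : q < 1) (hc : 0 < c) (hν : -1 < ν) :
    qMoment q c (ν + 1) / qGamma q (ν + 1 + 1) =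
      q ^ (-(ν + 1)) * (qMoment q c ν / qGamma q (ν + 1)) := by
  have hν1 : 0 < ν + 1 := by linarith
  have h1q : 0 < 1 - q := sub_pos.2 hq1
  have hqν : 0 < 1 - q ^ (ν + 1) := sub_pos.2 (Real.rpow_lt_one hq0.le hq1 hν1)
  rw [qMoment_add_one hq0 hq1 hc hν, qGamma_add_one hq0 hq1 hν1, Real.rpow_neg hq0.le]
  field_simp

lemma rpow_mul_qMoment_div_qGamma_add_natCast (hq0 : 0 < q) (hq1 : q < 1) (hc : 0 < c)
    (hν : -1 < ν) (i : ℕ) :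
    q ^ ((i : ℝ) * (i + ν)) * (qMoment q c (ν + i) / qGamma q (ν + i + 1)) =
      q ^ (i * (i - 1) / 2) * (qMoment q c ν / qGamma q (ν + 1)) := by
  induction i with
  | zero => simp
  | succ i ih =>
    have hexp : q ^ (((i + 1 : ℕ) : ℝ) * ((i + 1 : ℕ) + ν)) * q ^ (-(ν + i + 1)) =
        q ^ ((i : ℝ) * (i + ν)) * q ^ i := by
      rw [← Real.rpow_natCast q i, ← Real.rpow_add hq0, ← Real.rpow_add hq0]
      push_cast
      ring_nf
    have hi : -1 < ν + i := by linarith [i.cast_nonneg (α := ℝ)]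
    rw [Nat.cast_add_one, ← add_assoc ν, qMoment_div_qGamma_add_one hq0 hq1 hc hi, ← mul_assoc,
      ← Nat.cast_add_one, hexp, mul_right_comm, ih, Nat.triangle_succ, pow_add]
    ring

lemma qExpE_neg_pow_mul_eq_zero (hq0 : 0 < q) (hq1 : q < 1) {j k : ℕ} (hk : k ≤ j) :
    qExpE q (-(q ^ k * ((q ^ j)⁻¹ / (1 - q)))) = 0 := by
  obtain ⟨i, rfl⟩ := Nat.exists_eq_add_of_le hk
  have : q ^ k * ((q ^ (k + i))⁻¹ / (1 - q)) = (q ^ i)⁻¹ / (1 - q) := by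
    rw [pow_add]
    field_simp
  rw [this, qExpE_neg_inv_pow_div_eq_zero hq0 hq1]

lemma pow_add_mul_inv_pow_div (hq0 : 0 < q) (k j : ℕ) :
    q ^ (k + (j + 1)) * ((q ^ j)⁻¹ / (1 - q)) = q ^ (k + 1) / (1 - q) := by
  rw [pow_add, pow_succ q j, pow_succ q k]
  field_simp

lemma qExpE_neg_pow_mul_nonneg (hq0 : 0 < q) (hq1 : q < 1) (j k : ℕ) :
    0 ≤ qExpE q (-(q ^ k * ((q ^ j)⁻¹ / (1 - q)))) := by
  rcases le_or_gt k j with hk | hk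
  · rw [qExpE_neg_pow_mul_eq_zero hq0 hq1 hk]
  · obtain ⟨i, rfl⟩ := Nat.exists_eq_add_of_le' (Nat.succ_le_of_lt hk)
    have := qExpE_neg_rpow_div_pos hq0 hq1 (a := (i + 1 : ℕ)) (by positivity)
    rw [Nat.succ_eq_add_one, pow_add_mul_inv_pow_div hq0]
    rw [Real.rpow_natCast] at this
    exact this.le

lemma qExpE_neg_pow_succ_div (hq0 : 0 < q) (hq1 : q < 1) (k : ℕ) :
    qExpE q (-(q ^ (k + 1) / (1 - q))) =
      qExpE q (-(q / (1 - q))) / ((1 - q) ^ k * qFact q k) := by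
  have h1q : 0 < 1 - q := sub_pos.2 hq1
  induction k with
  | zero => simp [qFact_zero]
  | succ k ih =>
    have hstep : qExpE q (-(q ^ (k + 1) / (1 - q))) =
        (1 - q ^ (k + 1)) * qExpE q (-(q ^ (k + 1 + 1) / (1 - q))) := by
      rw [qExpE_eq_mul_qExpE_mul hq0 hq1, pow_succ' q (k + 1)]
      congr 2 <;> field_simp
    have := one_sub_pow_succ_pos hq0 hq1 k
    rw [← mul_right_inj' (one_sub_pow_succ_pos hq0 hq1 k).ne', ← hstep, ih, qFact_succ]
    field_simp
    ring

-- `E_q(-u)` vanishes at the first `j + 1` lattice points, so the integral does not depend on `j`.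
lemma hasJackson_rpow_mul_qExpE_neg (hq0 : 0 < q) (hq1 : q < 1) (hν : -1 < ν) (j : ℕ) :
    HasJackson q (fun k : ℕ => q ^ k * ((q ^ j)⁻¹ / (1 - q))) (fun u => u ^ ν * qExpE q (-u))
      (q ^ (ν + 1) * qGamma q (ν + 1)) := by
  have hν1 : 0 < ν + 1 := by linarith
  have h1q : 0 < 1 - q := sub_pos.2 hq1
  have hz : |q ^ (ν + 1) / (1 - q)| < 1 / (1 - q) := by
    rw [abs_of_pos (by positivity)]
    exact rpow_div_one_sub_lt hq0 hq1 hν1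
  have hE := qExpE_neg_rpow_div_pos hq0 hq1 hν1
  have hseries := (summable_qExpSeries hq0 hq1 hz).hasSum.mul_left
    (q ^ (ν + 1) * (1 - q) ^ (-ν) * qExpE q (-(q / (1 - q))))
  have hvalue : q ^ (ν + 1) * (1 - q) ^ (-ν) * qExpE q (-(q / (1 - q))) *
      qExpSeries q (q ^ (ν + 1) / (1 - q)) = q ^ (ν + 1) * qGamma q (ν + 1) := by
    rw [qGamma_eq hq0 hq1 hν1, eq_div_of_mul_eq hE.ne' (qExpSeries_mul_qExpE_neg hq0 hq1 hz)]
    ring_nf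
  rw [← hvalue, HasJackson, ← (add_left_injective (j + 1)).hasSum_iff]
  · refine hseries.congr_fun fun k => ?_
    have hpow : (q ^ (k + 1)) ^ ν = (q ^ ν) ^ k * q ^ ν := by
      rw [← Real.rpow_natCast, ← Real.rpow_mul hq0.le, mul_comm, Real.rpow_mul hq0.le,
        Real.rpow_natCast, pow_succ]
    simp only [Function.comp_apply, pow_add_mul_inv_pow_div hq0, qExpE_neg_pow_succ_div hq0 hq1]
    rw [Real.div_rpow (by positivity) h1q.le, hpow, Real.rpow_add_one hq0.ne',
      Real.rpow_neg h1q.le, div_pow, mul_pow, pow_succ]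
    field_simp
  · intro k hk
    have hkj : k ≤ j := by
      by_contra! hlt
      exact hk ⟨k - (j + 1), Nat.sub_add_cancel hlt⟩
    rw [qExpE_neg_pow_mul_eq_zero hq0 hq1 hkj, mul_zero, mul_zero]

end Moments

section Clifford

variable {q ν : ℝ}

/-- The first `q`-analogue of the Bessel–Clifford function: the power series left when the factor
`(x / (1 + q)) ^ ν` is split off `J^{(1)}_ν(x|q²)`, in the base `q²` and the variable
`z = (x / (1 + q)) ^ 2`. -/
def qClifford1 (q ν z : ℝ) : ℝ := ∑' i : ℕ, (-z) ^ i / (qFact q i * qGamma q (ν + i + 1))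

/-- The second `q`-analogue of the Bessel–Clifford function, obtained in the same way from
`J^{(2)}_ν(x|q²)` after removing also the constant `q ^ (ν ^ 2)`. -/
def qClifford2 (q ν z : ℝ) : ℝ :=
  ∑' i : ℕ, q ^ ((i : ℝ) * (i + ν)) * (-z) ^ i / (qFact q i * qGamma q (ν + i + 1))

lemma qClifford1_mul (q ν y u : ℝ) : qClifford1 q ν (y * u) =
    ∑' i : ℕ, (-y) ^ i / (qFact q i * qGamma q (ν + i + 1)) * u ^ i :=
  tsum_congr fun i => by rw [← neg_mul, mul_pow, mul_div_right_comm]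

lemma qClifford2_mul (q ν y u : ℝ) : qClifford2 q ν (y * u) =
    ∑' i : ℕ, q ^ ((i : ℝ) * (i + ν)) * (-y) ^ i / (qFact q i * qGamma q (ν + i + 1)) * u ^ i :=
  tsum_congr fun i => by rw [← neg_mul, mul_pow, ← mul_assoc, mul_div_right_comm]

lemma qBessel1_eq_qClifford1 (q ν x : ℝ) :
    qBessel1 q ν x = (x / (1 + q)) ^ ν * qClifford1 (q ^ 2) ν ((x / (1 + q)) ^ 2) := by
  rw [qBessel1, qClifford1]
  congr 1
  refine tsum_congr fun i => ?_
  rw [pow_mul, neg_pow, add_comm (i : ℝ) ν]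
  ring

lemma qBessel2_eq_qClifford2 (hq0 : 0 < q) (ν x : ℝ) :
    qBessel2 q ν x =
      q ^ (ν ^ 2) * (x / (1 + q)) ^ ν * qClifford2 (q ^ 2) ν ((x / (1 + q)) ^ 2) := by
  rw [qBessel2, qClifford2]
  congr 1
  refine tsum_congr fun i => ?_
  rw [mul_assoc 2 (i : ℝ), Real.rpow_mul hq0.le, Real.rpow_two, pow_mul,
    neg_pow ((x / (1 + q)) ^ 2), add_comm (i : ℝ) ν, add_comm ν (i : ℝ)]
  ring

lemma hasJackson_qClifford2_mul_qExpe (hq0 : 0 < q) (hq1 : q < 1) {c : ℝ} (hc : 0 < c)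
    (hν : -1 < ν) (y : ℝ) :
    HasJackson q (fun k : ℤ => q ^ k * c)
      (fun u => u ^ ν * (qClifford2 q ν (q * y * u) * qExpe q (q * u)))
      (q ^ (-(ν + 1)) * (qMoment q c ν / qGamma q (ν + 1)) * qExpE q (-y)) := by
  have hmoment (i : ℕ) := hasJackson_rpow_mul_qExpe_base_mul hq0 hq1 hc
    (by linarith [i.cast_nonneg (α := ℝ)] : -1 < ν + i)
  have hseries := (summable_qExpE hq0 hq1 (-y)).hasSum.mul_left
    (q ^ (-(ν + 1)) * (qMoment q c ν / qGamma q (ν + 1)))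
  have hcoeff (i : ℕ) :
      q ^ ((i : ℝ) * (i + ν)) * (-(q * y)) ^ i / (qFact q i * qGamma q (ν + i + 1)) *
          (q ^ (-(ν + i + 1)) * qMoment q c (ν + i)) =
        q ^ (-(ν + 1)) * (qMoment q c ν / qGamma q (ν + 1)) *
          (q ^ (i * (i - 1) / 2) * (-y) ^ i / qFact q i) := by
    have hpow : q ^ (-(ν + i + 1)) * q ^ i = q ^ (-(ν + 1)) := by
      rw [← Real.rpow_add_natCast hq0.ne']
      ring_nf
    calc _ = q ^ (-(ν + i + 1)) * q ^ i *
          (q ^ ((i : ℝ) * (i + ν)) * (qMoment q c (ν + i) / qGamma q (ν + i + 1))) *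
          ((-y) ^ i / qFact q i) := by
          rw [← mul_neg, mul_pow]
          ring
      _ = _ := by
          rw [hpow, rpow_mul_qMoment_div_qGamma_add_natCast hq0 hq1 hc hν]
          ring
  simp only [qClifford2_mul]
  exact HasJackson.tsum_mul_rpow_add (w := fun u => qExpe q (q * u)) hq1.le
    (fun k => by positivity) (fun k => qExpe_nonneg hq0 hq1 (by positivity)) hmoment
    (hseries.congr_fun hcoeff)

lemma hasJackson_qClifford1_mul_qExpE (hq0 : 0 < q) (hq1 : q < 1) (hν : -1 < ν) (j : ℕ) {y : ℝ}
    (hy : |q * y| < 1 / (1 - q)) :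
    HasJackson q (fun k : ℕ => q ^ k * ((q ^ j)⁻¹ / (1 - q)))
      (fun u => u ^ ν * (qClifford1 q ν (y * u) * qExpE q (-u)))
      (q ^ (ν + 1) * qExpe q (q * y)) := by
  have hνi (i : ℕ) : -1 < ν + i := by linarith [i.cast_nonneg (α := ℝ)]
  have hmoment (i : ℕ) := hasJackson_rpow_mul_qExpE_neg hq0 hq1 (hνi i) j
  have hseries := (summable_qExpSeries hq0 hq1 ((abs_neg _).trans_lt hy)).hasSum.mul_left
    (q ^ (ν + 1))
  have hcoeff (i : ℕ) :
      (-y) ^ i / (qFact q i * qGamma q (ν + i + 1)) *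
          (q ^ (ν + i + 1) * qGamma q (ν + i + 1)) =
        q ^ (ν + 1) * ((-(q * y)) ^ i / qFact q i) := by
    have := qGamma_pos hq0 hq1 (neg_lt_iff_pos_add.1 (hνi i))
    rw [add_right_comm, Real.rpow_add_natCast hq0.ne', ← mul_neg, mul_pow, add_right_comm]
    field_simp
  rw [← qExpSeries_neg_eq_qExpe hq0 hq1 hy]
  simp only [qClifford1_mul]
  exact HasJackson.tsum_mul_rpow_add (w := fun u => qExpE q (-u)) hq1.le
    (fun k => by positivity) (qExpE_neg_pow_mul_nonneg hq0 hq1 j) hmoment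
    (hseries.congr_fun hcoeff)

end Clifford

section Hankel

variable {q μ ν : ℝ}

/-- The kernel of `hankel1`, including the factor `(1 + q) / μ`. -/
def hankelKernel1 (q μ ν t r : ℝ) : ℝ :=
  (1 + q) / μ * (qBessel1 q ν ((1 + q) / μ * (r * t)) / (r * t) ^ ν * r ^ (2 * ν + 1))

/-- The kernel of `hankel2`, including the factor `(1 + q) / μ`. -/
def hankelKernel2 (q μ ν r s : ℝ) : ℝ :=
  (1 + q) / μ * (qBessel2 q ν (q * ((1 + q) / μ) * (r * s)) / (r * s) ^ ν * s ^ (2 * ν + 1))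

lemma hankel1_eq_of_hasJackson {β t I : ℝ} {f : ℝ → ℝ}
    (h : HasJackson q (fun k : ℕ => q ^ k * √(μ / ((1 - q ^ 2) * β)))
      (fun r => hankelKernel1 q μ ν t r * f r) I) : hankel1 q μ ν β f t = I := by
  rw [hankel1, jackson, ← tsum_mul_left, ← tsum_mul_left, ← HasSum.tsum_eq h]
  refine tsum_congr fun k => ?_
  simp only [hankelKernel1]
  ring

lemma hankel2_eq_of_hasJackson {γ r I : ℝ} {f : ℝ → ℝ}
    (h : HasJackson q (fun k : ℤ => q ^ k * γ) (fun s => hankelKernel2 q μ ν r s * f s) I) :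
    hankel2 q μ ν γ f r = I := by
  rw [hankel2, jacksonInf, ← tsum_mul_left, ← tsum_mul_left, ← HasSum.tsum_eq h]
  refine tsum_congr fun k => ?_
  simp only [hankelKernel2]
  ring

lemma hankelKernel1_eq (hq0 : 0 < q) (hμ : 0 < μ) {t r : ℝ} (ht : 0 < t) (hr : 0 < r) :
    hankelKernel1 q μ ν t r =
      (1 + q) / μ ^ (ν + 1) * (r ^ (2 * ν + 1) * qClifford1 (q ^ 2) ν ((r * t / μ) ^ 2)) := by
  have harg : (1 + q) / μ * (r * t) / (1 + q) = r * t / μ := by field_simp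
  rw [hankelKernel1, qBessel1_eq_qClifford1, harg, Real.div_rpow (by positivity) hμ.le,
    Real.rpow_add_one hμ.ne']
  field_simp

lemma hankelKernel2_eq (hq0 : 0 < q) (hμ : 0 < μ) {r s : ℝ} (hr : 0 < r) (hs : 0 < s) :
    hankelKernel2 q μ ν r s = (1 + q) * q ^ (ν * (ν + 1)) / μ ^ (ν + 1) *
      (s ^ (2 * ν + 1) * qClifford2 (q ^ 2) ν ((q * (r * s) / μ) ^ 2)) := by
  have harg : q * ((1 + q) / μ) * (r * s) / (1 + q) = q * (r * s) / μ := by field_simp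
  rw [hankelKernel2, qBessel2_eq_qClifford2 hq0, harg, Real.div_rpow (by positivity) hμ.le,
    Real.mul_rpow hq0.le (by positivity), Real.rpow_add_one hμ.ne',
    show ν * (ν + 1) = ν ^ 2 + ν by ring, Real.rpow_add hq0]
  field_simp

/-- The factor `d` by which the composition of the two `q`-Hankel transforms acts. -/
def hankelConst (q μ ν γ α : ℝ) : ℝ :=
  q ^ (ν * (ν + 1)) / qGamma (q ^ 2) (ν + 1) * qMoment (q ^ 2) (α * γ ^ 2 / μ) ν

lemma hankelConst_base_pow_mul (hq : q ≠ 0) (j : ℕ) (μ ν γ α : ℝ) :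
    hankelConst q μ ν γ ((q ^ 2) ^ j * α) = hankelConst q μ ν γ α := by
  rw [hankelConst, hankelConst, qMoment, qMoment, mul_assoc, mul_div_assoc,
    jacksonInf_base_pow_mul (pow_ne_zero 2 hq)]

lemma hasJackson_hankelKernel2_mul_qExpe (hq0 : 0 < q) (hq1 : q < 1) (hμ : 0 < μ) (hν : -1 < ν)
    {α γ r : ℝ} (hα : 0 < α) (hγ : 0 < γ) (hr : 0 < r) :
    HasJackson q (fun k : ℤ => q ^ k * γ)
      (fun s => hankelKernel2 q μ ν r s * qExpe (q ^ 2) (q ^ 2 * (α / μ * s ^ 2)))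
      (hankelConst q μ ν γ α / (q ^ 2 * α) ^ (ν + 1) * qExpE (q ^ 2) (-(r ^ 2 / (μ * α)))) := by
  have hQ0 : 0 < q ^ 2 := by positivity
  have hQ1 : q ^ 2 < 1 := pow_lt_one₀ hq0.le hq1 two_ne_zero
  have hbase := hasJackson_qClifford2_mul_qExpe hQ0 hQ1 (c := α * γ ^ 2 / μ) (by positivity) hν
    (r ^ 2 / (μ * α))
  have hlattice : (fun k : ℤ => (q ^ 2) ^ k * (α * γ ^ 2 / μ)) =
      fun k : ℤ => α / μ * (q ^ k * γ) ^ 2 := by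
    funext k
    rw [mul_pow, ← zpow_natCast, ← zpow_natCast (q ^ k), zpow_comm]
    ring
  rw [hlattice] at hbase
  have hscaled := (hbase.comp_mul_sq (by positivity) (fun k => by positivity)
    (by positivity : 0 < α / μ)).const_mul ((1 + q) * q ^ (ν * (ν + 1)) / μ ^ (ν + 1))
  convert hscaled.congr fun k => ?_ using 1
  · rw [hankelConst, Real.div_rpow hα.le hμ.le, Real.mul_rpow hQ0.le hα.le, Real.rpow_neg hQ0.le]
    field_simp
  · rw [hankelKernel2_eq hq0 hμ hr (by positivity), show q ^ 2 * (r ^ 2 / (μ * α)) *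
      (α / μ * (q ^ k * γ) ^ 2) = (q * (r * (q ^ k * γ)) / μ) ^ 2 by field_simp]
    ring

lemma hasJackson_hankelKernel1_mul_qExpE (hq0 : 0 < q) (hq1 : q < 1) (hμ : 0 < μ) (hν : -1 < ν)
    {α t R : ℝ} (j : ℕ) (hα : 0 < α) (ht : 0 < t) (hR : 0 < R)
    (hR2 : R ^ 2 = ((q ^ 2) ^ j)⁻¹ / (1 - q ^ 2) * (μ * α))
    (htα : q ^ 2 * (α / μ * t ^ 2) < 1 / (1 - q ^ 2)) :
    HasJackson q (fun k : ℕ => q ^ k * R)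
      (fun r => hankelKernel1 q μ ν t r * qExpE (q ^ 2) (-(r ^ 2 / (μ * α))))
      ((q ^ 2 * α) ^ (ν + 1) * qExpe (q ^ 2) (q ^ 2 * (α / μ * t ^ 2))) := by
  have hQ0 : 0 < q ^ 2 := by positivity
  have hQ1 : q ^ 2 < 1 := pow_lt_one₀ hq0.le hq1 two_ne_zero
  have hbase := hasJackson_qClifford1_mul_qExpE hQ0 hQ1 hν j
    ((abs_of_pos (by positivity)).trans_lt htα)
  have hlattice : (fun k : ℕ => (q ^ 2) ^ k * (((q ^ 2) ^ j)⁻¹ / (1 - q ^ 2))) =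
      fun k : ℕ => (μ * α)⁻¹ * (q ^ k * R) ^ 2 := by
    funext k
    rw [mul_pow, hR2, pow_right_comm]
    field_simp
  rw [hlattice] at hbase
  have hscaled := (hbase.comp_mul_sq (by positivity) (fun k => by positivity)
    (by positivity : 0 < (μ * α)⁻¹)).const_mul ((1 + q) / μ ^ (ν + 1))
  convert hscaled.congr fun k => ?_ using 1
  · rw [Real.inv_rpow (by positivity), Real.mul_rpow hμ.le hα.le, Real.mul_rpow hQ0.le hα.le]
    field_simp
  · rw [hankelKernel1_eq hq0 hμ ht (by positivity), show α / μ * t ^ 2 * ((μ * α)⁻¹ *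
      (q ^ k * R) ^ 2) = (q ^ k * R * t / μ) ^ 2 by field_simp, inv_mul_eq_div (μ * α)]
    ring

end Hankel

section Inversion

variable {q μ ν α γ : ℝ}

/-- The functions `f` whose second `q`-Hankel transform `g` converges absolutely and whose iterated
transform converges absolutely to `hankelConst q μ ν γ α * f` on `0 < t < √(μ / (α (1 - q²)))`. -/
def hankelInvertible (q μ ν γ α : ℝ) : Submodule ℝ (ℝ → ℝ) where
  carrier := {f | ∃ g : ℝ → ℝ,
    (∀ r, 0 < r →
      HasJackson q (fun k : ℤ => q ^ k * γ) (fun s => hankelKernel2 q μ ν r s * f s) (g r)) ∧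
    ∀ t, 0 < t → t < √(μ / (α * (1 - q ^ 2))) →
      HasJackson q (fun k : ℕ => q ^ k * √(μ / ((1 - q ^ 2) * (1 / α))))
        (fun r => hankelKernel1 q μ ν t r * g r) (hankelConst q μ ν γ α * f t)}
  zero_mem' := by
    refine ⟨0, fun r _ => ?_, fun t _ _ => ?_⟩ <;> simp [HasJackson, hasSum_zero]
  add_mem' := by
    rintro f f' ⟨g, hfg, hgf⟩ ⟨g', hfg', hgf'⟩
    refine ⟨g + g', fun r hr => ?_, fun t ht htT => ?_⟩
    · simpa only [Pi.add_apply, mul_add] using (hfg r hr).add (hfg' r hr)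
    · simpa only [Pi.add_apply, mul_add] using (hgf t ht htT).add (hgf' t ht htT)
  smul_mem' := by
    rintro a f ⟨g, hfg, hgf⟩
    refine ⟨a • g, fun r hr => ?_, fun t ht htT => ?_⟩
    · simpa only [Pi.smul_apply, smul_eq_mul, mul_left_comm a] using (hfg r hr).const_mul a
    · simpa only [Pi.smul_apply, smul_eq_mul, mul_left_comm a] using (hgf t ht htT).const_mul a

-- The cutoff is fitted to `α`, but it also serves `q ^ (2 * j) * α` because the transform of the
-- latter Gaussian vanishes at the additional lattice points.
lemma qExpe_mem_hankelInvertible (hq0 : 0 < q) (hq1 : q < 1) (hμ : 0 < μ) (hν : -1 < ν)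
    (hα : 0 < α) (hγ : 0 < γ) (j : ℕ) :
    (fun s => qExpe (q ^ 2) ((q ^ 2) ^ j * (q ^ 2 * α / μ) * s ^ 2)) ∈
      hankelInvertible q μ ν γ α := by
  have h1Q : 0 < 1 - q ^ 2 := sub_pos.2 (pow_lt_one₀ hq0.le hq1 two_ne_zero)
  have hαj : 0 < (q ^ 2) ^ j * α := by positivity
  have harg (s : ℝ) : (q ^ 2) ^ j * (q ^ 2 * α / μ) * s ^ 2 =
      q ^ 2 * ((q ^ 2) ^ j * α / μ * s ^ 2) := by ring
  simp only [harg]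
  refine ⟨_, fun r hr => hasJackson_hankelKernel2_mul_qExpe hq0 hq1 hμ hν hαj hγ hr,
    fun t ht htT => ?_⟩
  have hcutoff : √(μ / ((1 - q ^ 2) * (1 / α))) ^ 2 =
      ((q ^ 2) ^ j)⁻¹ / (1 - q ^ 2) * (μ * ((q ^ 2) ^ j * α)) := by
    rw [Real.sq_sqrt (by positivity)]
    field_simp
  have htα : q ^ 2 * ((q ^ 2) ^ j * α / μ * t ^ 2) < 1 / (1 - q ^ 2) :=
    calc q ^ 2 * ((q ^ 2) ^ j * α / μ * t ^ 2) = q ^ (2 * (j + 1)) * (α / μ * t ^ 2) := by ring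
      _ ≤ α / μ * t ^ 2 :=
        mul_le_of_le_one_left (by positivity) (pow_le_one₀ hq0.le hq1.le)
      _ < α / μ * (μ / (α * (1 - q ^ 2))) := by
        gcongr
        exact (Real.lt_sqrt ht.le).1 htT
      _ = 1 / (1 - q ^ 2) := by field_simp
  have hback := (hasJackson_hankelKernel1_mul_qExpE hq0 hq1 hμ hν j hαj ht (by positivity) hcutoff
    htα).const_mul (hankelConst q μ ν γ ((q ^ 2) ^ j * α) / (q ^ 2 * ((q ^ 2) ^ j * α)) ^ (ν + 1))
  rw [hankelConst_base_pow_mul hq0.ne', ← mul_assoc (_ / _),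
    div_mul_cancel₀ _ (by positivity)] at hback
  refine hback.congr fun k => ?_
  rw [hankelConst_base_pow_mul hq0.ne', mul_left_comm]

lemma eval_sq_mul_qExpe_mem_hankelInvertible (hq0 : 0 < q) (hq1 : q < 1) (hμ : 0 < μ)
    (hν : -1 < ν) (hα : 0 < α) (hγ : 0 < γ) (p : Polynomial ℝ) :
    (fun s => p.eval (s ^ 2) * qExpe (q ^ 2) (α * q ^ 2 * s ^ 2 / μ)) ∈
      hankelInvertible q μ ν γ α := by
  have hspan := eval_sq_mul_qExpe_mem_span (pow_pos hq0 2) (pow_lt_one₀ hq0.le hq1 two_ne_zero)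
    (by positivity : 0 < q ^ 2 * α / μ) p
  have hle := Submodule.span_le.2 <| Set.range_subset_iff.2 fun j =>
    qExpe_mem_hankelInvertible hq0 hq1 hμ hν hα hγ j
  convert hle hspan using 5
  ring

lemma summable_of_mem_hankelInvertible (hq0 : 0 < q) (hq1 : q < 1) (hμ : μ ≠ 0) (hγ : γ ≠ 0)
    {f : ℝ → ℝ} (hf : f ∈ hankelInvertible q μ ν γ α) {r : ℝ} (hr : 0 < r) :
    Summable (fun k : ℤ =>
      qBessel2 q ν (q * ((1 + q) / μ) * (r * (q ^ k * γ))) / (r * (q ^ k * γ)) ^ ν *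
        (q ^ k * γ) ^ (2 * ν + 1) * f (q ^ k * γ) * q ^ k) := by
  obtain ⟨g, hfg, -⟩ := hf
  have hconst : (1 - q) * γ * ((1 + q) / μ) ≠ 0 := by positivity
  refine (summable_mul_left_iff hconst).1 ((HasSum.summable (hfg r hr)).congr fun k => ?_)
  simp only [hankelKernel2]
  ring

lemma hankel1_hankel2_of_mem_hankelInvertible (hq0 : 0 < q) (hq1 : q < 1) (hμ : 0 < μ)
    (hα : 0 < α) {f : ℝ → ℝ} (hf : f ∈ hankelInvertible q μ ν γ α) {t : ℝ} (ht : 0 < t)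
    (htT : t < √(μ / (α * (1 - q ^ 2)))) :
    hankel1 q μ ν (1 / α) (fun r => hankel2 q μ ν γ f r) t = hankelConst q μ ν γ α * f t := by
  obtain ⟨g, hfg, hgf⟩ := hf
  have h1Q : 0 < 1 - q ^ 2 := sub_pos.2 (pow_lt_one₀ hq0.le hq1 two_ne_zero)
  refine hankel1_eq_of_hasJackson ((hgf t ht htT).congr fun k => ?_)
  rw [hankel2_eq_of_hasJackson (hfg _ (by positivity))]

theorem hankel_inversion_general (hq0 : 0 < q) (hq1 : q < 1) (hμ : 0 < μ) (hν : -1 < ν)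
    (hα : 0 < α) (hγ : 0 < γ) (p : Polynomial ℝ) :
    let f : ℝ → ℝ := fun s => p.eval (s ^ 2) * qExpe (q ^ 2) (α * q ^ 2 * s ^ 2 / μ)
    let g : ℝ → ℝ := fun r => hankel2 q μ ν γ f r
    (∀ r : ℝ, 0 < r → Summable (fun k : ℤ =>
      qBessel2 q ν (q * ((1 + q) / μ) * (r * (q ^ k * γ))) / (r * (q ^ k * γ)) ^ ν *
        (q ^ k * γ) ^ (2 * ν + 1) * f (q ^ k * γ) * q ^ k)) ∧
    ∀ t : ℝ, 0 < t → t < √(μ / (α * (1 - q ^ 2))) →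
      hankel1 q μ ν (1 / α) g t =
        (q ^ (ν * (ν + 1)) / qGamma (q ^ 2) (ν + 1) *
          jacksonInf (q ^ 2) (α * γ ^ 2 / μ) (fun u => u ^ ν * qExpe (q ^ 2) u)) * f t := by
  have hf := eval_sq_mul_qExpe_mem_hankelInvertible hq0 hq1 hμ hν hα hγ p
  exact ⟨fun r hr => summable_of_mem_hankelInvertible hq0 hq1 hμ.ne' hγ.ne' hf hr,
    fun t ht htT => hankel1_hankel2_of_mem_hankelInvertible hq0 hq1 hμ hα hf ht htT⟩

end Inversion

/-- inversion of the q-Hankel transforms. With `μ = 1 + q^{2-m}`, `ν ≥ -1/2`,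
`α, γ > 0`, `f(s) = p(s²) e_{q²}(-αq²s²/μ)` and `g = 𝓗^{q,γ}_ν[f]` (whose defining bilateral
series converges absolutely), for `0 < t < √(μ/(α(1-q²)))` one has
`𝓗̄^{q,1/α}_ν[g](t) = d · f(t)` with
`d = (q^{ν(ν+1)}/Γ_{q²}(ν+1)) ∫_0^{(αγ²/μ)·∞} d_{q²}u u^ν e_{q²}(-u)`. -/
theorem hankel_inversion (q : ℝ) (hq0 : 0 < q) (hq1 : q < 1)
    (m : ℕ) (hm : 1 ≤ m) (ν : ℝ) (hν : -(1 / 2) ≤ ν)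
    (α γ : ℝ) (hα : 0 < α) (hγ : 0 < γ) (p : Polynomial ℝ) :
    let μ : ℝ := 1 + q ^ ((2 : ℝ) - (m : ℝ))
    let f : ℝ → ℝ := fun s => p.eval (s ^ 2) * qExpe (q ^ 2) (α * q ^ 2 * s ^ 2 / μ)
    let g : ℝ → ℝ := fun r => hankel2 q μ ν γ f r
    (∀ r : ℝ, 0 < r → Summable (fun k : ℤ =>
      qBessel2 q ν (q * ((1 + q) / μ) * (r * (q ^ k * γ))) / (r * (q ^ k * γ)) ^ ν *
        (q ^ k * γ) ^ (2 * ν + 1) * f (q ^ k * γ) * q ^ k)) ∧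
    ∀ t : ℝ, 0 < t → t < Real.sqrt (μ / (α * (1 - q ^ 2))) →
      hankel1 q μ ν (1 / α) g t =
        (q ^ (ν * (ν + 1)) / qGamma (q ^ 2) (ν + 1) *
          jacksonInf (q ^ 2) (α * γ ^ 2 / μ) (fun u => u ^ ν * qExpe (q ^ 2) u)) * f t := by
  intro μ
  exact hankel_inversion_general hq0 hq1 (by positivity) (by linarith) hα hγ p
end
end
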